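/- arXiv:1812.10415 — 11 statements merged into one kernel-verified Lean document; each statement's English description precedes it below -/
import Mathlib

section
/- Let D be a nonzero fourth-power-free integer and let E_D be the elliptic curve over ℚ with Weierstrass equation y² = x³ + D·x. Then the torsion subgroup of E_D(ℚ) is isomorphic to ℤ/4ℤ if D = 4, isomorphic to ℤ/2ℤ × ℤ/2ℤ if −D is a perfect square, and isomorphic to ℤ/2ℤ otherwise. -/
/-- The elliptic curve `E_D : y² = x³ + D·x` over `ℚ`, as an affine Weierstrass curve. -/
def EDcurve (D : ℚ) : WeierstrassCurve.Affine ℚ := ⟨0, 0, 0, D, 0⟩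

namespace EDTors

abbrev v (q : ℚ) : ℤ := padicValRat 2 q

lemma v_add {a b : ℚ} (ha : a ≠ 0) (hb : b ≠ 0) (h : v a < v b) : a + b ≠ 0 ∧ v (a + b) = v a := by
  have h0 : a + b ≠ 0 := by
    intro h0
    have : b = -a := by linarith
    rw [this] at h
    simp [v, padicValRat.neg] at h
  exact ⟨h0, padicValRat.add_eq_of_lt h0 ha hb h⟩

lemma v_two : v 2 = 1 := by
  have := padicValRat.self (p := 2) (by norm_num)
  simpa [v] using this

lemma odd_of_v {a : ℚ} (ha : a ≠ 0) (h : v a = 0) : ¬ (2:ℤ) ∣ a.num ∧ ¬ (2:ℤ) ∣ a.den := by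
  have h1 : (padicValInt 2 a.num : ℤ) = padicValNat 2 a.den := by
    have := padicValRat_def 2 a
    simp only [v] at h
    omega
  have hn : a.num ≠ 0 := by simpa using ha
  have hcop := a.reduced
  by_cases hd : 2 ∣ a.den
  · have h2 := one_le_padicValNat_of_dvd (p := 2) a.den_ne_zero hd
    have h3 : 1 ≤ padicValNat 2 a.num.natAbs := by
      have : (padicValInt 2 a.num : ℤ) = padicValNat 2 a.num.natAbs := rfl
      omega
    have h4 := dvd_of_one_le_padicValNat h3
    have := Nat.dvd_gcd h4 hd
    rw [hcop] at this
    omega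
  · have h2 := padicValNat.eq_zero_of_not_dvd hd
    rw [h2] at h1
    have h3 : padicValInt 2 a.num = 0 := by omega
    rw [padicValInt.eq_zero_iff] at h3
    refine ⟨?_, by omega⟩
    rcases h3 with h3 | h3 | h3
    · omega
    · exact absurd h3 hn
    · exact_mod_cast h3

lemma v_int_nonneg (n : ℤ) : 0 ≤ v n := by simp [v]

lemma v_add_units {a b : ℚ} (ha : a ≠ 0) (hb : b ≠ 0) (hab : a + b ≠ 0) (h1 : v a = 0)
    (h2 : v b = 0) : 1 ≤ v (a + b) := by
  obtain ⟨o1, o2⟩ := odd_of_v ha h1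
  obtain ⟨o3, o4⟩ := odd_of_v hb h2
  have ea := Rat.num_div_den a
  have eb := Rat.num_div_den b
  have hda : (a.den : ℚ) ≠ 0 := by exact_mod_cast a.den_ne_zero
  have hdb : (b.den : ℚ) ≠ 0 := by exact_mod_cast b.den_ne_zero
  obtain ⟨k, hk⟩ : (2:ℤ) ∣ a.num * b.den + b.num * a.den := by
    have e1 : (a.num * b.den) % 2 = 1 := by
      rw [Int.mul_emod]; rw [show a.num % 2 = 1 by omega, show (b.den : ℤ) % 2 = 1 by omega]; rfl
    have e2 : (b.num * a.den) % 2 = 1 := by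
      rw [Int.mul_emod]; rw [show b.num % 2 = 1 by omega, show (a.den : ℤ) % 2 = 1 by omega]; rfl
    omega
  have hkq : (a.num : ℚ) * b.den + b.num * a.den = 2 * k := by exact_mod_cast hk
  have key : (a + b) * ((a.den : ℤ) : ℚ) * ((b.den : ℤ) : ℚ) = 2 * k := by
    rw [← hkq]
    push_cast
    nth_rewrite 1 [← ea]
    nth_rewrite 1 [← eb]
    field_simp
  have hda' : ((a.den : ℤ) : ℚ) ≠ 0 := by exact_mod_cast a.den_ne_zero
  have hdb' : ((b.den : ℤ) : ℚ) ≠ 0 := by exact_mod_cast b.den_ne_zero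
  have hk0 : (k : ℚ) ≠ 0 := by
    intro hk0
    rw [hk0, mul_zero] at key
    exact (mul_ne_zero (mul_ne_zero hab hda') hdb') key
  have := congrArg v key
  simp only [v] at this
  rw [padicValRat.mul (mul_ne_zero hab hda') hdb', padicValRat.mul hab hda',
    padicValRat.mul two_ne_zero hk0] at this
  have e1 : padicValRat 2 ((a.den : ℤ) : ℚ) = 0 := by
    rw [padicValRat.of_int, padicValInt.eq_zero_of_not_dvd (by exact_mod_cast o2)]; rfl
  have e2 : padicValRat 2 ((b.den : ℤ) : ℚ) = 0 := by
    rw [padicValRat.of_int, padicValInt.eq_zero_of_not_dvd (by exact_mod_cast o4)]; rfl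
  have e3 := v_int_nonneg k
  have e4 := v_two
  simp only [v] at e3 e4 ⊢
  omega

/-- valuation of `s' = (s⁴ - D)/(2 s t)` where `t² = s⁴ + D`. -/
lemma val_formula {s t D : ℚ} (hs : s ≠ 0) (ht : t ≠ 0) (hn : s ^ 4 - D ≠ 0) :
    v ((s ^ 4 - D) / (2 * (s * t))) = v (s ^ 4 - D) - 1 - v s - v t := by
  have := v_two
  simp only [v] at *
  rw [padicValRat.div hn (mul_ne_zero two_ne_zero (mul_ne_zero hs ht)),
    padicValRat.mul two_ne_zero (mul_ne_zero hs ht), padicValRat.mul hs ht]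
  omega

lemma v_pow (s : ℚ) (n : ℕ) : v (s ^ n) = n * v s := by
  simp [v]

lemma v_neg (s : ℚ) : v (-s) = v s := by
  simp [v]

lemma big_step {s t D : ℚ} (hs : s ≠ 0) (hD : D ≠ 0) (e : t ^ 2 = s ^ 4 + D)
    (h : 4 * v s < v D) : t ≠ 0 ∧ s ^ 4 - D ≠ 0 ∧ v ((s ^ 4 - D) / (2 * (s * t))) = v s - 1 := by
  have h4 : v (s ^ 4) = 4 * v s := v_pow s 4
  obtain ⟨a0, a1⟩ := v_add (pow_ne_zero 4 hs) hD (by rw [h4]; exact h)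
  obtain ⟨b0, b1⟩ := v_add (b := -D) (pow_ne_zero 4 hs) (neg_ne_zero.mpr hD)
    (by rw [h4, v_neg]; exact h)
  have ht : t ≠ 0 := by
    rintro rfl
    exact a0 (by rw [← e]; norm_num)
  rw [← sub_eq_add_neg] at b0 b1
  refine ⟨ht, b0, ?_⟩
  rw [val_formula hs ht b0, b1]
  rw [← e, v_pow] at a1
  push_cast at a1
  omega

lemma sub_ne {s t D : ℚ} (hs : s ≠ 0) (e : t ^ 2 = s ^ 4 + D) : s ^ 4 - D ≠ 0 := by
  intro h
  have : t ^ 2 = 2 * s ^ 4 := by linarith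
  have := congrArg v this
  rw [v_pow] at this
  simp only [v] at this
  rw [padicValRat.mul two_ne_zero (pow_ne_zero 4 hs), padicValRat.pow] at this
  have h2 := v_two
  simp only [v] at h2
  push_cast at this
  omega

lemma small_step {s t D : ℚ} (hs : s ≠ 0) (ht : t ≠ 0) (hD : D ≠ 0) (e : t ^ 2 = s ^ 4 + D)
    (h0 : 0 ≤ v D) (h3 : v D ≤ 3)
    (h : v D ≤ 4 * v s) : 4 * v ((s ^ 4 - D) / (2 * (s * t))) < v D := by
  have hn := sub_ne hs e
  rw [val_formula hs ht hn]
  have h4 : v (s ^ 4) = 4 * v s := v_pow s 4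
  have ht2 : v (t ^ 2) = 2 * v t := v_pow t 2
  have hA : s ^ 4 + D ≠ 0 := by rw [← e]; exact pow_ne_zero 2 ht
  rcases h.lt_or_eq with h | h
  · obtain ⟨a0, a1⟩ := v_add hD (pow_ne_zero 4 hs) (by rw [h4]; exact h)
    obtain ⟨b0, b1⟩ := v_add (a := -D) (neg_ne_zero.mpr hD) (pow_ne_zero 4 hs)
      (by rw [h4, v_neg]; exact h)
    rw [show -D + s ^ 4 = s ^ 4 - D by ring, v_neg] at b1
    rw [add_comm, ← e, ht2] at a1
    omega
  · have hs0 : v s = 0 := by omega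
    have hD0 : v D = 0 := by omega
    have h1 := v_add_units (pow_ne_zero 4 hs) hD hA (by omega) hD0
    rw [← e, ht2] at h1
    have h5 : v (2 * s ^ 4) = 1 := by
      have h2 := v_two
      simp only [v] at h2 h4 ⊢
      rw [padicValRat.mul two_ne_zero (pow_ne_zero 4 hs)]
      simp only [v] at hs0
      omega
    obtain ⟨b0, b1⟩ := v_add (a := 2 * s ^ 4) (b := - t ^ 2)
      (mul_ne_zero two_ne_zero (pow_ne_zero 4 hs)) (neg_ne_zero.mpr (pow_ne_zero 2 ht))
      (by rw [v_neg, ht2]; omega)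
    rw [show 2 * s ^ 4 + - t ^ 2 = s ^ 4 - D by rw [e]; ring] at b1
    omega

lemma v_le_three {D : ℤ} (hD : D ≠ 0) (hfree : ∀ q : ℤ, Prime q → ¬ q ^ 4 ∣ D) : v D ≤ 3 := by
  by_contra h
  apply hfree 2 Int.prime_two
  have h1 : 4 ≤ padicValNat 2 D.natAbs := by
    have : v D = (padicValNat 2 D.natAbs : ℤ) := by simp [v, padicValInt]
    omega
  have := (padicValNat_dvd_iff_le (p := 2) (Int.natAbs_ne_zero.mpr hD)).mpr h1
  have h2 := Int.natCast_dvd.mpr this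
  exact_mod_cast h2

/-! ### integrality -/

lemma int_of_pow {s : ℚ} {n : ℤ} (h : s ^ 4 = n) : ∃ m : ℤ, s = m := by
  have : IsIntegral ℤ s := by
    apply IsIntegral.of_pow (n := 4) (by norm_num)
    rw [h]
    exact isIntegral_algebraMap (R := ℤ) (A := ℚ) (x := n)
  obtain ⟨m, hm⟩ := IsIntegrallyClosed.isIntegral_iff.mp this
  exact ⟨m, by simpa using hm.symm⟩

lemma unit_of_free {D m c : ℤ} (hfree : ∀ q : ℤ, Prime q → ¬ q ^ 4 ∣ D) (h : D = c * m ^ 4)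
     : m = 1 ∨ m = -1 := by
  rw [← Int.isUnit_iff]
  by_contra hm
  rw [Int.isUnit_iff_natAbs_eq] at hm
  obtain ⟨p, hp, hpd⟩ := Nat.exists_prime_and_dvd hm
  refine hfree p (Nat.prime_iff_prime_int.mp hp) ?_
  rw [h]
  exact Dvd.dvd.mul_left (pow_dvd_pow_of_dvd (Int.natCast_dvd.mpr hpd) 4) c

lemma eq_four {D : ℤ} (hfree : ∀ q : ℤ, Prime q → ¬ q ^ 4 ∣ D) {u : ℚ} (h : (D : ℚ) = 4 * u ^ 4) :
    D = 4 ∧ u ^ 2 = 1 := by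
  obtain ⟨m, hm⟩ : ∃ m : ℤ, 2 * u = m := int_of_pow (n := 4 * D) (by push_cast; rw [h]; ring)
  have h1 : m ^ 4 = 4 * D := by
    have : (m : ℚ) ^ 4 = 4 * D := by rw [← hm, h]; ring
    exact_mod_cast this
  have h2 : Even m := by
    have : Even (m ^ 4) := by rw [h1]; exact ⟨2 * D, by ring⟩
    exact (Int.even_pow.mp this).1
  obtain ⟨k, hk⟩ := h2
  have h3 : D = 4 * k ^ 4 := by
    have : 16 * k ^ 4 = 4 * D := by rw [← h1, hk]; ring
    linarith
  have hu : u = k := by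
    have : 2 * u = 2 * k := by rw [hm, hk]; push_cast; ring
    linarith
  rcases unit_of_free hfree h3 with h | h <;> subst h <;> simp [h3, hu]

open WeierstrassCurve.Affine in
lemma ns_iff {D : ℚ} (hD : D ≠ 0) (x y : ℚ) :
    (EDcurve D).Nonsingular x y ↔ y ^ 2 = x ^ 3 + D * x := by
  rw [nonsingular_iff, equation_iff]
  simp only [EDcurve]
  constructor
  · rintro ⟨h, -⟩
    linarith
  · intro h
    refine ⟨by linarith, ?_⟩
    by_contra hc
    push Not at hc
    obtain ⟨h1, h2⟩ := hc
    have hy : y = 0 := by linarith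
    subst hy
    have h3 : x * (x ^ 2 + D) = 0 := by linarith
    rcases mul_eq_zero.mp h3 with h4 | h4
    · subst h4; apply hD; linarith
    · have : x ^ 2 = 0 := by linarith
      apply hD; linarith

open WeierstrassCurve.Affine in
lemma dbl_zero {D : ℚ} {x y : ℚ} (h : (EDcurve D).Nonsingular x y) (hy : y = 0) :
    Point.some x y h + Point.some x y h = 0 := by
  apply Point.add_self_of_Y_eq
  simp [negY, EDcurve, hy]

open WeierstrassCurve.Affine in
lemma dbl {D : ℚ} (hD : D ≠ 0) {x y : ℚ} (h : (EDcurve D).Nonsingular x y) (hy : y ≠ 0) :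
    ∃ (y' : ℚ) (h' : (EDcurve D).Nonsingular (((x ^ 2 - D) / (2 * y)) ^ 2) y'),
      Point.some x y h + Point.some x y h = Point.some _ y' h' := by
  have hne : y ≠ (EDcurve D).negY x y := by
    simp only [negY, EDcurve]
    intro h
    apply hy
    linarith
  have e := (ns_iff hD x y).mp h
  have key : (EDcurve D).addX x x ((EDcurve D).slope x x y y) = ((x ^ 2 - D) / (2 * y)) ^ 2 := by
    rw [slope_of_Y_ne rfl hne]
    simp only [addX, negY, EDcurve]
    have : y - (-y - 0 * x - 0) = 2 * y := by ring
    rw [this]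
    field_simp
    rw [e]
    ring
  have := Point.add_self_of_Y_ne (h₁ := h) hne
  have h2 := nonsingular_add h h fun hxy => hne hxy.right
  rw [this]
  generalize_proofs pf
  revert pf
  rw [key]
  intro pf
  exact ⟨_, pf, rfl⟩

open WeierstrassCurve.Affine in
lemma iter {D : ℚ} (hD : D ≠ 0) {s y : ℚ} (hs : s ≠ 0)
    (h : (EDcurve D).Nonsingular (s ^ 2) y) (hv : 4 * v s < v D) (n : ℕ) :
    ∃ (s' y' : ℚ) (h' : (EDcurve D).Nonsingular (s' ^ 2) y'), s' ≠ 0 ∧ v s' = v s - n ∧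
      2 ^ n • Point.some _ y h = Point.some _ y' h' := by
  induction n with
  | zero => exact ⟨s, y, h, hs, by simp, by simp⟩
  | succ n ih =>
    obtain ⟨a, b, hab, ha, hva, hP⟩ := ih
    have e := (ns_iff hD _ _).mp hab
    have e2 : (b / a) ^ 2 = a ^ 4 + D := by
      field_simp
      rw [e]; ring
    obtain ⟨h1, h2, h3⟩ := big_step ha hD e2 (by omega)
    have hb : b ≠ 0 := by
      rintro rfl
      simp at h1
    obtain ⟨y', h', hd⟩ := dbl hD hab hb
    rw [show (a ^ 2) ^ 2 = a ^ 4 by ring] at *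
    rw [show a * (b / a) = b by field_simp] at h3
    refine ⟨_, y', h', ?_, ?_, ?_⟩
    · exact div_ne_zero h2 (mul_ne_zero two_ne_zero hb)
    · rw [h3]; push_cast; omega
    · rw [pow_succ, mul_comm, mul_nsmul', hP, two_nsmul, hd]
      simp only [Point.some.injEq, and_true]
      ring

open WeierstrassCurve.Affine in
lemma not_tors {D : ℚ} (hD : D ≠ 0) {s y : ℚ} (hs : s ≠ 0)
    (h : (EDcurve D).Nonsingular (s ^ 2) y) (hv : 4 * v s < v D) :
    ¬ IsOfFinAddOrder (Point.some _ y h) := by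
  intro hf
  have hfin : (AddSubmonoid.multiples (Point.some _ y h) : Set (EDcurve D).Point).Finite :=
    finite_multiples.mpr hf
  have : Function.Injective (fun n : ℕ => 2 ^ n • Point.some _ y h) := by
    intro i j hij
    obtain ⟨a, b, h1, -, h2, h3⟩ := iter hD hs h hv i
    obtain ⟨a', b', h1', -, h2', h3'⟩ := iter hD hs h hv j
    simp only [h3, h3', Point.some.injEq] at hij
    have := congrArg v hij.1
    rw [v_pow, v_pow] at this
    push_cast at this
    omega
  refine Set.infinite_range_of_injective this (hfin.subset ?_)
  rintro _ ⟨n, rfl⟩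
  exact ⟨2 ^ n, rfl⟩

lemma no_sqrt_two (x : ℚ) (h : (x ^ 2 - 2 * x - 1) ^ 2 = 0) : False := by
  have h1 : (x - 1) ^ 2 = 2 := by
    have := pow_eq_zero_iff (two_ne_zero) |>.mp h
    linarith
  have := congrArg v h1
  rw [v_pow, v_two] at this
  push_cast at this
  omega

open WeierstrassCurve.Affine in
lemma tors_main {D : ℤ} (hD : D ≠ 0) (hfree : ∀ q : ℤ, Prime q → ¬ q ^ 4 ∣ D) {x y : ℚ}
    (h : (EDcurve (D : ℚ)).Nonsingular x y) (hf : IsOfFinAddOrder (Point.some x y h)) :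
    y = 0 ∨ (D = 4 ∧ x = 2 ∧ (y = 4 ∨ y = -4)) := by
  have hDq : (D : ℚ) ≠ 0 := by exact_mod_cast hD
  have h3 := v_le_three hD hfree
  have h0 := v_int_nonneg D
  by_cases hy : y = 0
  · exact Or.inl hy
  right
  have e := (ns_iff hDq x y).mp h
  obtain ⟨y', h', hd⟩ := dbl hDq h hy
  have hf2 : IsOfFinAddOrder (Point.some _ y' h') := by rw [← hd]; exact hf.add hf
  have e' := (ns_iff hDq _ y').mp h'
  obtain ⟨s, hs⟩ : ∃ s, s = (x ^ 2 - (D : ℚ)) / (2 * y) := ⟨_, rfl⟩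
  have hsy : s * (2 * y) = x ^ 2 - D := by rw [hs]; field_simp
  clear hd
  revert h'
  rw [← hs]
  intro h' hf2
  rw [← hs] at e'
  by_cases hs0 : s = 0
  · have hx2 : x ^ 2 = D := by rw [hs0] at hsy; linarith
    have hx : x ≠ 0 := by rintro rfl; apply hDq; rw [← hx2]; norm_num
    have hu : x = 2 * (y / (2 * x)) ^ 2 := by
      field_simp
      rw [e, ← hx2]; ring
    have hDu : (D : ℚ) = 4 * (y / (2 * x)) ^ 4 := by
      rw [← hx2]
      nth_rewrite 1 [hu]
      ring
    obtain ⟨hD4, hu1⟩ := eq_four hfree hDu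
    have hx' : x = 2 := by rw [hu, hu1]; norm_num
    refine ⟨hD4, hx', ?_⟩
    have : (y - 4) * (y + 4) = 0 := by
      subst hx' hD4
      push_cast at e
      linarith
    rcases mul_eq_zero.mp this with h | h
    · left; linarith
    · right; linarith
  exfalso
  by_cases hy' : y' = 0
  · have : s ^ 2 * (s ^ 4 + D) = 0 := by rw [hy'] at e'; linarith
    have hs4 : s ^ 4 = ((-D : ℤ) : ℚ) := by
      rcases mul_eq_zero.mp this with h | h
      · exact absurd h (pow_ne_zero 2 hs0)
      · push_cast; linarith
    obtain ⟨m, hm⟩ := int_of_pow hs4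
    have hDm : D = (-1) * m ^ 4 := by
      rw [hm] at hs4
      have : m ^ 4 = - D := by exact_mod_cast hs4
      linarith
    have hm2 := unit_of_free hfree hDm
    have hs2 : s ^ 2 = 1 := by
      rw [hm]; rcases hm2 with h | h <;> simp [h]
    have hD1 : (D : ℚ) = -1 := by
      have : s ^ 4 = 1 := by rw [show s ^ 4 = (s ^ 2) ^ 2 by ring, hs2]; norm_num
      rw [this] at hs4
      push_cast at hs4
      linarith
    apply no_sqrt_two x
    have : s ^ 2 * (4 * y ^ 2) = (x ^ 2 - D) ^ 2 := by rw [← hsy]; ring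
    rw [hs2, e, hD1] at this
    linarith
  · have e2 : (y' / s) ^ 2 = s ^ 4 + D := by
      field_simp
      rw [e']; ring
    have ht : y' / s ≠ 0 := div_ne_zero hy' hs0
    by_cases hv : 4 * v s < v D
    · exact not_tors hDq hs0 h' hv hf2
    · have h1 := small_step hs0 ht hDq e2 h0 h3 (by omega)
      have h2 := sub_ne hs0 e2
      obtain ⟨y'', h'', hd⟩ := dbl hDq h' hy'
      have hf3 : IsOfFinAddOrder (Point.some _ y'' h'') := by rw [← hd]; exact hf2.add hf2
      rw [show s * (y' / s) = y' by field_simp] at h1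
      rw [← show (s ^ 2) ^ 2 = s ^ 4 by ring] at h1 h2
      exact not_tors hDq (div_ne_zero h2 (mul_ne_zero two_ne_zero hy')) h'' h1 hf3

/-! ### group structure -/

open WeierstrassCurve.Affine in
lemma tors_of_y_zero {D : ℚ} {x : ℚ} (h : (EDcurve D).Nonsingular x 0) :
    IsOfFinAddOrder (Point.some x 0 h) := by
  rw [isOfFinAddOrder_iff_nsmul_eq_zero]
  exact ⟨2, by norm_num, by rw [two_nsmul]; exact dbl_zero h rfl⟩

open WeierstrassCurve.Affine in
lemma case_two {D : ℤ} (hD : D ≠ 0) (hfree : ∀ q : ℤ, Prime q → ¬ q ^ 4 ∣ D) (h4 : D ≠ 4)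
    (hk : ¬ ∃ k : ℤ, -D = k ^ 2) :
    Nonempty ((AddCommGroup.torsion (EDcurve (D : ℚ)).Point) ≃+ ZMod 2) := by
  have hDq : (D : ℚ) ≠ 0 := by exact_mod_cast hD
  have h0 : (EDcurve (D : ℚ)).Nonsingular 0 0 := (ns_iff hDq _ _).mpr (by norm_num)
  let T : AddCommGroup.torsion (EDcurve (D : ℚ)).Point := ⟨Point.some 0 0 h0, tors_of_y_zero h0⟩
  have hcard : Nat.card (AddCommGroup.torsion (EDcurve (D : ℚ)).Point) = 2 := by
    rw [Nat.card_eq_two_iff]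
    refine ⟨0, T, ?_, ?_⟩
    · intro h
      exact Point.some_ne_zero h0 (congrArg Subtype.val h).symm
    · rw [Set.eq_univ_iff_forall]
      rintro ⟨P, hP⟩
      rcases P with _ | ⟨x, y, h⟩
      · left; rfl
      · right
        rcases tors_main hD hfree h hP with hy | hy
        · subst hy
          have e := (ns_iff hDq _ _).mp h
          have : x * (x ^ 2 + D) = 0 := by linarith
          rcases mul_eq_zero.mp this with hx | hx
          · subst hx; rfl
          · exfalso
            apply hk
            have hx2 : ((-D : ℤ) : ℚ) = x * x := by push_cast; linarith
            have : IsSquare ((-D : ℤ) : ℚ) := ⟨x, hx2⟩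
            rw [Rat.isSquare_intCast_iff] at this
            obtain ⟨r, hr⟩ := this
            exact ⟨r, by rw [hr]; ring⟩
        · exact absurd hy.1 h4
  have : Fact (Nat.Prime 2) := ⟨Nat.prime_two⟩
  have hc := isAddCyclic_of_prime_card hcard
  have e := zmodAddCyclicAddEquiv hc
  rw [hcard] at e
  exact ⟨e.symm⟩

open WeierstrassCurve.Affine in
lemma case_klein {D : ℤ} (hD : D ≠ 0) (hfree : ∀ q : ℤ, Prime q → ¬ q ^ 4 ∣ D)
    (hk : ∃ k : ℤ, -D = k ^ 2) :
    Nonempty ((AddCommGroup.torsion (EDcurve (D : ℚ)).Point) ≃+ (ZMod 2 × ZMod 2)) := by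
  obtain ⟨k, hk⟩ := hk
  have h4 : D ≠ 4 := by rintro rfl; nlinarith [sq_nonneg k]
  have hDq : (D : ℚ) ≠ 0 := by exact_mod_cast hD
  have hkq : (D : ℚ) = - (k : ℚ) ^ 2 := by
    have : D = - k ^ 2 := by linarith
    rw [this]; push_cast; ring
  have hk0 : (k : ℚ) ≠ 0 := by intro h; rw [h] at hkq; apply hDq; rw [hkq]; norm_num
  have h0 : (EDcurve (D : ℚ)).Nonsingular 0 0 := (ns_iff hDq _ _).mpr (by norm_num)
  have h1 : (EDcurve (D : ℚ)).Nonsingular k 0 := (ns_iff hDq _ _).mpr (by rw [hkq]; ring)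
  have h2 : (EDcurve (D : ℚ)).Nonsingular (-k) 0 := (ns_iff hDq _ _).mpr (by rw [hkq]; ring)
  let T0 : AddCommGroup.torsion (EDcurve (D : ℚ)).Point := ⟨Point.some 0 0 h0, tors_of_y_zero h0⟩
  let T1 : AddCommGroup.torsion (EDcurve (D : ℚ)).Point := ⟨Point.some _ 0 h1, tors_of_y_zero h1⟩
  let T2 : AddCommGroup.torsion (EDcurve (D : ℚ)).Point := ⟨Point.some _ 0 h2, tors_of_y_zero h2⟩
  have n0 : (0 : AddCommGroup.torsion (EDcurve (D : ℚ)).Point) ≠ T0 := fun h =>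
    Point.some_ne_zero h0 (congrArg Subtype.val h).symm
  have n1 : (0 : AddCommGroup.torsion (EDcurve (D : ℚ)).Point) ≠ T1 := fun h =>
    Point.some_ne_zero h1 (congrArg Subtype.val h).symm
  have n2 : (0 : AddCommGroup.torsion (EDcurve (D : ℚ)).Point) ≠ T2 := fun h =>
    Point.some_ne_zero h2 (congrArg Subtype.val h).symm
  have n01 : T0 ≠ T1 := fun h => by
    have := congrArg Subtype.val h
    simp only [T0, T1, Point.some.injEq] at this
    exact hk0 this.1.symm
  have n02 : T0 ≠ T2 := fun h => by
    have := congrArg Subtype.val h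
    simp only [T0, T2, Point.some.injEq] at this
    exact hk0 (by linarith [this.1])
  have n12 : T1 ≠ T2 := fun h => by
    have := congrArg Subtype.val h
    simp only [T1, T2, Point.some.injEq] at this
    exact hk0 (by linarith [this.1])
  have hall : ∀ P : AddCommGroup.torsion (EDcurve (D : ℚ)).Point,
      (P = 0 ∨ P = T0 ∨ P = T1 ∨ P = T2) ∧ 2 • P = 0 := by
    rintro ⟨P, hP⟩
    rcases P with _ | ⟨x, y, h⟩
    · exact ⟨Or.inl rfl, nsmul_zero 2⟩
    · rcases tors_main hD hfree h hP with hy | hy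
      · subst hy
        constructor
        · right
          have e := (ns_iff hDq _ _).mp h
          have : x * ((x - k) * (x + k)) = 0 := by rw [hkq] at e; linarith
          rcases mul_eq_zero.mp this with hx | hx
          · subst hx; left; rfl
          · right
            rcases mul_eq_zero.mp hx with hx | hx
            · left
              have : x = k := by linarith
              subst this; rfl
            · right
              have : x = -k := by linarith
              subst this; rfl
        · apply Subtype.ext
          rw [two_nsmul]
          exact dbl_zero h rfl
      · exact absurd hy.1 h4
  have hcard : Nat.card (AddCommGroup.torsion (EDcurve (D : ℚ)).Point) = 4 := by
    classical
    have hu : (Set.univ : Set (AddCommGroup.torsion (EDcurve (D : ℚ)).Point)) =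
        (({0, T0, T1, T2} : Finset _) : Set _) := by
      symm
      rw [Set.eq_univ_iff_forall]
      intro P
      simpa using (hall P).1
    rw [← Set.ncard_univ, hu, Set.ncard_coe_finset]
    simp [n0, n1, n2, n01, n02, n12]
  have : IsAddKleinFour (AddCommGroup.torsion (EDcurve (D : ℚ)).Point) := by
    refine ⟨hcard, ?_⟩
    have hdvd := AddMonoid.exponent_dvd_of_forall_nsmul_eq_zero (fun P => (hall P).2)
    rcases (Nat.dvd_prime Nat.prime_two).mp hdvd with h | h
    · rw [AddMonoid.exp_eq_one_iff] at h
      exact absurd (Subsingleton.elim _ _) n0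
    · exact h
  exact IsAddKleinFour.nonempty_addEquiv

open WeierstrassCurve.Affine in
lemma case_four (hfree : ∀ q : ℤ, Prime q → ¬ q ^ 4 ∣ (4 : ℤ)) :
    Nonempty ((AddCommGroup.torsion (EDcurve ((4 : ℤ) : ℚ)).Point) ≃+ ZMod 4) := by
  have hDq : ((4 : ℤ) : ℚ) ≠ 0 := by norm_num
  have h0 : (EDcurve ((4 : ℤ) : ℚ)).Nonsingular 0 0 := (ns_iff hDq _ _).mpr (by norm_num)
  have h1 : (EDcurve ((4 : ℤ) : ℚ)).Nonsingular 2 4 := (ns_iff hDq _ _).mpr (by norm_num)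
  have h2 : (EDcurve ((4 : ℤ) : ℚ)).Nonsingular 2 (-4) := (ns_iff hDq _ _).mpr (by norm_num)
  have d1 : Point.some _ _ h1 + Point.some _ _ h1 = Point.some _ _ h0 := by
    obtain ⟨y', h', hd⟩ := dbl hDq h1 (by norm_num)
    rw [hd]
    have e := (ns_iff hDq _ _).mp h'
    norm_num at e
    simp only [Point.some.injEq]
    exact ⟨by norm_num, e⟩
  have d0 := dbl_zero h0 rfl
  have dn : - Point.some _ _ h1 = Point.some _ _ h2 := by
    rw [Point.neg_some]
    simp [negY, EDcurve]
  have o1 : addOrderOf (Point.some _ _ h1) = 2 ^ (1 + 1) := by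
    apply addOrderOf_eq_prime_pow
    · rw [pow_one, two_nsmul, d1]; exact Point.some_ne_zero h0
    · rw [show 2 ^ (1 + 1) = 2 * 2 by norm_num, mul_nsmul', two_nsmul, two_nsmul, d1, d0]
  have f1 : IsOfFinAddOrder (Point.some _ _ h1) := by
    rw [← addOrderOf_pos_iff, o1]; norm_num
  let Q : AddCommGroup.torsion (EDcurve ((4 : ℤ) : ℚ)).Point := ⟨Point.some _ _ h1, f1⟩
  have hgen : ∀ P, P ∈ AddSubgroup.zmultiples Q := by
    rintro ⟨P, hP⟩
    rw [AddSubgroup.mem_zmultiples_iff]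
    rcases P with _ | ⟨x, y, h⟩
    · exact ⟨0, zero_zsmul _⟩
    · rcases tors_main (by norm_num) hfree h hP with hy | ⟨-, hx, hy | hy⟩
      · subst hy
        have e := (ns_iff hDq _ _).mp h
        push_cast at e
        have : x * (x ^ 2 + 4) = 0 := by linarith
        rcases mul_eq_zero.mp this with hx | hx
        · subst hx
          refine ⟨2, Subtype.ext ?_⟩
          rw [two_zsmul]
          exact d1
        · nlinarith [sq_nonneg x]
      · subst hx hy
        exact ⟨1, one_zsmul _⟩
      · subst hx hy
        refine ⟨-1, Subtype.ext ?_⟩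
        rw [neg_one_zsmul]
        exact dn
  have hc : IsAddCyclic (AddCommGroup.torsion (EDcurve ((4 : ℤ) : ℚ)).Point) := ⟨Q, hgen⟩
  have hcard : Nat.card (AddCommGroup.torsion (EDcurve ((4 : ℤ) : ℚ)).Point) = 4 := by
    rw [← addOrderOf_eq_card_of_forall_mem_zmultiples hgen, ← AddSubgroup.addOrderOf_coe]
    exact o1
  have e := zmodAddCyclicAddEquiv hc
  rw [hcard] at e
  exact ⟨e.symm⟩

end EDTors


/-- For `D` a nonzero fourth-power-free integer, the torsion subgroup of
`E_D(ℚ)` is `ℤ/4ℤ` if `D = 4`, `ℤ/2ℤ × ℤ/2ℤ` if `-D` is a perfect square, and `ℤ/2ℤ`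
otherwise. -/
theorem stmt1 (D : ℤ) (hD : D ≠ 0) (hfree : ∀ q : ℤ, Prime q → ¬ q ^ 4 ∣ D) :
    (D = 4 →
      Nonempty ((AddCommGroup.torsion (EDcurve (D : ℚ)).Point) ≃+ ZMod 4)) ∧
    ((∃ k : ℤ, -D = k ^ 2) →
      Nonempty ((AddCommGroup.torsion (EDcurve (D : ℚ)).Point) ≃+ (ZMod 2 × ZMod 2))) ∧
    (D ≠ 4 → ¬ (∃ k : ℤ, -D = k ^ 2) →
      Nonempty ((AddCommGroup.torsion (EDcurve (D : ℚ)).Point) ≃+ ZMod 2)) := by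

  refine ⟨?_, EDTors.case_klein hD hfree, EDTors.case_two hD hfree⟩
  rintro rfl
  exact EDTors.case_four hfree
end

section
/- Let q be a prime with q ≡ 3 (mod 4) and let D be a nonzero element of the finite field 𝔽_q. Then the elliptic curve over 𝔽_q with Weierstrass equation y² = x³ + D·x has exactly q + 1 points over 𝔽_q (counting the point at infinity). -/
/-- The elliptic curve `y² = x³ + D·x` over the finite field `𝔽_q = ZMod q`. -/
def EDcurveFq (q : ℕ) (D : ZMod q) : WeierstrassCurve.Affine (ZMod q) := ⟨0, 0, 0, D, 0⟩

/-- For a prime `q ≡ 3 (mod 4)` and `D ≠ 0` in `𝔽_q`, the elliptic curve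
`y² = x³ + D·x` has exactly `q + 1` points over `𝔽_q` (counting the point at infinity). -/
theorem stmt2 (q : ℕ) [Fact q.Prime] (hq : q % 4 = 3) (D : ZMod q) (hD : D ≠ 0) :
    Nat.card (EDcurveFq q D).Point = q + 1 := by
  classical
  have hp : q.Prime := Fact.out
  have hc : ringChar (ZMod q) ≠ 2 := by
    rw [ZMod.ringChar_zmod_n]; omega
  have h2 : (2 : ZMod q) ≠ 0 := Ring.two_ne_zero hc
  have hm1 : quadraticChar (ZMod q) (-1) = -1 := by
    rw [quadraticChar_neg_one_iff_not_isSquare, ZMod.exists_sq_eq_neg_one_iff]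
    omega
  haveI : WeierstrassCurve.IsElliptic (EDcurveFq q D) := by
    refine ⟨IsUnit.mk0 _ ?_⟩
    have : (EDcurveFq q D).Δ = -(2 ^ 6 * D ^ 3) := by
      simp only [EDcurveFq, WeierstrassCurve.Δ, WeierstrassCurve.b₂, WeierstrassCurve.b₄,
        WeierstrassCurve.b₆, WeierstrassCurve.b₈]
      ring
    rw [this]
    exact neg_ne_zero.mpr (mul_ne_zero (pow_ne_zero _ h2) (pow_ne_zero _ hD))
  have hsum : ∑ x : ZMod q, quadraticChar (ZMod q) (x ^ 3 + D * x) = 0 := by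
    have h := Equiv.sum_comp (Equiv.neg (ZMod q))
      (fun x => quadraticChar (ZMod q) (x ^ 3 + D * x))
    have h' : ∀ x : ZMod q, quadraticChar (ZMod q) ((-x) ^ 3 + D * (-x))
        = - quadraticChar (ZMod q) (x ^ 3 + D * x) := by
      intro x
      rw [show (-x) ^ 3 + D * (-x) = (-1) * (x ^ 3 + D * x) by ring, map_mul, hm1]
      ring
    simp only [Equiv.neg_apply, h', Finset.sum_neg_distrib] at h
    omega
  have e1 : {xy : ZMod q × ZMod q // (EDcurveFq q D).Equation xy.fst xy.snd} ≃
      (Σ x : ZMod q, {y : ZMod q // y ^ 2 = x ^ 3 + D * x}) :=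
    (Equiv.subtypeEquivRight (fun xy => by
      simp [WeierstrassCurve.Affine.equation_iff, EDcurveFq])).trans
      (Equiv.subtypeProdEquivSigmaSubtype (fun x y : ZMod q => y ^ 2 = x ^ 3 + D * x))
  have hcount : Nat.card {xy : ZMod q × ZMod q // (EDcurveFq q D).Equation xy.fst xy.snd} = q := by
    rw [Nat.card_congr e1, Nat.card_eq_fintype_card, Fintype.card_sigma]
    zify
    have : ∀ x : ZMod q, (Fintype.card {y : ZMod q // y ^ 2 = x ^ 3 + D * x} : ℤ)
        = quadraticChar (ZMod q) (x ^ 3 + D * x) + 1 := by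
      intro x
      rw [← quadraticChar_card_sqrts hc, Set.toFinset_card]
      rfl
    simp only [this, Finset.sum_add_distrib, hsum]
    simp [ZMod.card]
  rw [Nat.card_congr (EDcurveFq q D).pointEquiv]
  change Nat.card (Option _) = _
  rw [Finite.card_option, hcount]
end

section
/- Let A and B be abelian groups and let φ : A → B and ψ : B → A be group homomorphisms such that ψ ∘ φ is multiplication by 2 on A. Assume that the quotient B/φ(A), the quotient A/ψ(B), and the kernel of ψ are all finite. Then A/2A is finite and |A/2A| · |ker ψ| = |B/φ(A)| · |A/ψ(B)| · |φ(A[2])|, where A[2] denotes the 2-torsion subgroup of A. -/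
/-- Descent identity. If `φ : A → B` and `ψ : B → A` are homomorphisms of abelian
groups with `ψ ∘ φ` equal to multiplication by `2` on `A`, and `B/φ(A)`, `A/ψ(B)` and `ker ψ`
are finite, then `A/2A` is finite and
`|A/2A| · |ker ψ| = |B/φ(A)| · |A/ψ(B)| · |φ(A[2])|`. -/
theorem stmt4 {A B : Type*} [AddCommGroup A] [AddCommGroup B]
    (φ : A →+ B) (ψ : B →+ A) (hcomp : ∀ a : A, ψ (φ a) = 2 • a)
    (h1 : Finite (B ⧸ φ.range)) (h2 : Finite (A ⧸ ψ.range)) (h3 : Finite ψ.ker) :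
    Finite (A ⧸ (2 • AddMonoidHom.id A).range) ∧
      Nat.card (A ⧸ (2 • AddMonoidHom.id A).range) * Nat.card ψ.ker =
        Nat.card (B ⧸ φ.range) * Nat.card (A ⧸ ψ.range) *
          Nat.card (AddSubgroup.map φ (2 • AddMonoidHom.id A).ker) := by
  have hr : (2 • AddMonoidHom.id A).range = φ.range.map ψ := by
    ext x
    simp [AddSubgroup.mem_map, hcomp]
  have hk : AddSubgroup.map φ (2 • AddMonoidHom.id A).ker = φ.range ⊓ ψ.ker := by
    ext x
    simp only [AddSubgroup.mem_map, AddSubgroup.mem_inf, AddMonoidHom.mem_ker,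
      AddMonoidHom.mem_range]
    constructor
    · rintro ⟨a, ha, rfl⟩
      exact ⟨⟨a, rfl⟩, by rw [hcomp]; simpa using ha⟩
    · rintro ⟨⟨a, rfl⟩, ha⟩
      exact ⟨a, by rw [hcomp] at ha; simpa using ha, rfl⟩
  have e1 := AddSubgroup.index_map φ.range ψ
  have e2 : φ.range.relIndex (φ.range ⊔ ψ.ker) * (φ.range ⊔ ψ.ker).index = φ.range.index :=
    AddSubgroup.relIndex_mul_index le_sup_left
  rw [AddSubgroup.relIndex_sup_left, ← AddSubgroup.inf_relIndex_right] at e2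
  have e3 := AddSubgroup.relIndex_mul_relIndex (⊥ : AddSubgroup B) (φ.range ⊓ ψ.ker) ψ.ker
    bot_le inf_le_right
  rw [AddSubgroup.relIndex_bot_left, AddSubgroup.relIndex_bot_left] at e3
  have n1 : φ.range.index ≠ 0 := Nat.card_pos.ne'
  have n2 : ψ.range.index ≠ 0 := Nat.card_pos.ne'
  rw [hr, hk]
  constructor
  · apply (Nat.finite_of_card_ne_zero (α := A ⧸ φ.range.map ψ))
    change (φ.range.map ψ).index ≠ 0
    rw [e1]
    refine mul_ne_zero ?_ n2
    intro h
    rw [h, mul_zero] at e2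
    exact n1 e2.symm
  · change (φ.range.map ψ).index * _ = φ.range.index * ψ.range.index * _
    rw [e1, ← e2, ← e3]
    ring
end

section
/- Let D be a nonzero fourth-power-free integer and let E_D be the elliptic curve over ℚ with Weierstrass equation y² = x³ + D·x. Let ν(2D) denote the number of distinct prime divisors of 2D. Then the quotient group E_D(ℚ)/2E_D(ℚ) is finite and its order is at most 2^(2·ν(2D) + 1). (Equivalently, the rank of E_D(ℚ) is strictly less than 2·ν(2D).) -/
/-- The subgroup `2·G` of an abelian group `G`, the image of multiplication by `2`. -/
def twoSub (G : Type*) [AddCommGroup G] : AddSubgroup G := (2 • AddMonoidHom.id G).range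

open WeierstrassCurve WeierstrassCurve.Affine

namespace ED

lemma eqn_iff {a x y : ℚ} : (EDcurve a).Equation x y ↔ y ^ 2 = x ^ 3 + a * x := by
  rw [equation_iff]; simp [EDcurve]

lemma nonsing {a x y : ℚ} (ha : a ≠ 0) (h : y ^ 2 = x ^ 3 + a * x) :
    (EDcurve a).Nonsingular x y := by
  refine (equation_iff_nonsingular_of_Δ_ne_zero ?_).1 (eqn_iff.2 h)
  simp [EDcurve, WeierstrassCurve.Δ, WeierstrassCurve.b₂, WeierstrassCurve.b₄,
    WeierstrassCurve.b₆, WeierstrassCurve.b₈, ha]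

lemma eqn_of {a x y : ℚ} (h : (EDcurve a).Nonsingular x y) : y ^ 2 = x ^ 3 + a * x :=
  eqn_iff.1 h.1

lemma negY_eq (a x y : ℚ) : (EDcurve a).negY x y = -y := by
  simp [EDcurve, negY]

lemma some_congr {a x y x' y' : ℚ} (h : (EDcurve a).Nonsingular x y)
    (h' : (EDcurve a).Nonsingular x' y') (hx : x = x') (hy : y = y') :
    Point.some x y h = Point.some x' y' h' := by
  subst hx hy; rfl

lemma neg_some' {a x y : ℚ} (h : (EDcurve a).Nonsingular x y)
    (h' : (EDcurve a).Nonsingular x (-y)) :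
    -Point.some x y h = Point.some x (-y) h' := by
  rw [Point.neg_some]; exact some_congr _ _ rfl (negY_eq _ _ _)

/-- `x1, x2, x3` are the abscissae of the intersection with `y = m x + c`. -/
structure Line (a m c x1 x2 x3 : ℚ) : Prop where
  s1 : x1 + x2 + x3 = m ^ 2
  s2 : x1 * x2 + x1 * x3 + x2 * x3 = a - 2 * m * c
  s3 : x1 * x2 * x3 = c ^ 2

lemma Line.rot {a m c x1 x2 x3 : ℚ} (h : Line a m c x1 x2 x3) : Line a m c x2 x3 x1 :=
  ⟨by linarith [h.s1], by linarith [h.s2], by linarith [h.s3]⟩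

lemma sum_zero {a m c x1 x2 x3 y1 y2 y3 : ℚ} (ha : a ≠ 0) (L : Line a m c x1 x2 x3)
    (e1 : y1 = m * x1 + c) (e2 : y2 = m * x2 + c) (e3 : y3 = m * x3 + c)
    (h1 : (EDcurve a).Nonsingular x1 y1) (h2 : (EDcurve a).Nonsingular x2 y2)
    (h3 : (EDcurve a).Nonsingular x3 y3) :
    Point.some x1 y1 h1 + Point.some x2 y2 h2 + Point.some x3 y3 h3 = 0 := by
  obtain ⟨s1, s2, s3⟩ := L
  have hne : ¬ (x1 = x2 ∧ y1 = (EDcurve a).negY x2 y2) := by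
    rw [negY_eq]
    rintro ⟨rfl, hy⟩
    have hy0 : y1 = 0 := by linarith
    have hc : c = - (m * x1) := by linarith
    have E := eqn_of h1
    rw [hy0] at E
    have hx3 : x3 = m ^ 2 - 2 * x1 := by linarith
    subst hc hx3
    have h3 : 3 * x1 ^ 2 + a = 0 := by nlinarith
    have hx : x1 ^ 3 = 0 := by
      have : a = -3 * x1 ^ 2 := by linarith
      rw [this] at E; linarith
    have : x1 = 0 := by simpa using hx
    subst this; apply ha; linarith
  have hs : (EDcurve a).slope x1 x2 y1 y2 = m := by
    by_cases hx : x1 = x2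
    · subst hx
      have hy : y1 ≠ (EDcurve a).negY x1 y2 := fun h => hne ⟨rfl, h⟩
      rw [slope_of_Y_ne rfl hy, negY_eq]
      rw [negY_eq] at hy
      have hyy : y1 = y2 := by rw [e1, e2]
      have : y1 - -y1 ≠ 0 := by intro h; apply hy; linarith
      rw [div_eq_iff this]
      simp only [EDcurve]
      have hx3 : x3 = m ^ 2 - 2 * x1 := by linarith
      subst hx3
      rw [e1]; nlinarith
    · rw [slope_of_X_ne hx, div_eq_iff (sub_ne_zero.2 hx), e1, e2]; ring
  rw [Point.add_some hne, ← eq_neg_iff_add_eq_zero, Point.neg_some]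
  have hX : (EDcurve a).addX x1 x2 ((EDcurve a).slope x1 x2 y1 y2) = x3 := by
    rw [hs]; simp [addX, EDcurve]; linarith
  apply some_congr _ _ hX
  rw [addY, hX, negY_eq, negY_eq, negAddY, hX, hs, e1, e3]; ring

lemma line_of_add {a x1 x2 y1 y2 : ℚ} (h1 : (EDcurve a).Nonsingular x1 y1)
    (h2 : (EDcurve a).Nonsingular x2 y2) (hne : ¬ (x1 = x2 ∧ y1 = -y2)) :
    ∃ m c x3 y3, ∃ h3 : (EDcurve a).Nonsingular x3 y3, Line a m c x1 x2 x3 ∧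
      y1 = m * x1 + c ∧ y2 = m * x2 + c ∧ y3 = m * x3 + c ∧
      Point.some x1 y1 h1 + Point.some x2 y2 h2 = - Point.some x3 y3 h3 := by
  have hne' : ¬ (x1 = x2 ∧ y1 = (EDcurve a).negY x2 y2) := by rwa [negY_eq]
  set m := (EDcurve a).slope x1 x2 y1 y2 with hm
  have hp := addPolynomial_slope h1.1 h2.1 hne'
  rw [← hm, addPolynomial_eq, neg_inj, Cubic.prod_X_sub_C_eq, Cubic.toPoly_injective] at hp
  have hX : (EDcurve a).addX x1 x2 m = m ^ 2 - x1 - x2 := by simp [addX, EDcurve]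
  rw [hX] at hp
  simp only [EDcurve, Cubic.mk.injEq] at hp
  obtain ⟨-, -, p2, p3⟩ := hp
  refine ⟨m, y1 - m * x1, _, _, nonsingular_negAdd h1 h2 hne', ⟨?_, ?_, ?_⟩, ?_, ?_, ?_, ?_⟩
  · rw [← hm, hX]; ring
  · rw [← hm, hX]; linarith
  · rw [← hm, hX]; linarith
  · ring
  · by_cases hx : x1 = x2
    · have e1 := eqn_of h1
      have e2 := eqn_of h2
      subst hx
      have : (y1 - y2) * (y1 + y2) = 0 := by linarith
      rcases mul_eq_zero.1 this with h | h
      · linarith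
      · exact absurd ⟨rfl, by linarith⟩ hne
    · rw [hm, slope_of_X_ne hx]
      have := sub_ne_zero.2 hx
      field_simp; ring
  · rw [← hm, negAddY, hX]; ring
  · rw [Point.add_some hne', Point.neg_some]
    exact some_congr _ _ rfl rfl

/-- A function vanishing on lines is additive. -/
lemma additive_of_lines {a : ℚ} {A : Type*} [AddCommGroup A]
    (f : (EDcurve a).Point → A) (h0 : f 0 = 0) (hneg : ∀ P, f (-P) = - f P)
    (hl : ∀ m c x1 x2 x3 y1 y2 y3 : ℚ, Line a m c x1 x2 x3 → y1 = m * x1 + c →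
      y2 = m * x2 + c → y3 = m * x3 + c → ∀ (h1 : (EDcurve a).Nonsingular x1 y1)
      (h2 : (EDcurve a).Nonsingular x2 y2) (h3 : (EDcurve a).Nonsingular x3 y3),
      f (.some x1 y1 h1) + f (.some x2 y2 h2) + f (.some x3 y3 h3) = 0)
    (P Q : (EDcurve a).Point) : f (P + Q) = f P + f Q := by
  rcases P with _ | ⟨x1, y1, h1⟩
  · rw [← Point.zero_def, zero_add, h0, zero_add]
  rcases Q with _ | ⟨x2, y2, h2⟩
  · rw [← Point.zero_def, add_zero, h0, add_zero]
  by_cases hne : x1 = x2 ∧ y1 = -y2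
  · obtain ⟨rfl, rfl⟩ := hne
    have : Point.some x1 (-y2) h1 = - Point.some x1 y2 h2 := (neg_some' h2 h1).symm
    rw [this, neg_add_cancel, h0, hneg, neg_add_cancel]
  · obtain ⟨m, c, x3, y3, h3, L, e1, e2, e3, hs⟩ := line_of_add h1 h2 hne
    rw [hs, hneg, neg_eq_iff_add_eq_zero, add_comm]
    exact hl _ _ _ _ _ _ _ _ L e1 e2 e3 h1 h2 h3

/-! ### The isogeny -/

lemma phi_eqn {a b l x y : ℚ} (h : b = -4 * a * l ^ 4) (hx : x ≠ 0)
    (e : y ^ 2 = x ^ 3 + a * x) :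
    (l ^ 3 * (y * (a - x ^ 2) / x ^ 2)) ^ 2 =
      (l ^ 2 * (x + a / x)) ^ 3 + b * (l ^ 2 * (x + a / x)) := by
  subst h
  have : (l ^ 3 * (y * (a - x ^ 2) / x ^ 2)) ^ 2 =
    l ^ 6 * ((x ^ 3 + a * x) * (a - x ^ 2) ^ 2 / x ^ 4) := by rw [← e]; field_simp
  rw [this]; field_simp; ring

open Classical in
/-- The isogeny `E_a → E_b`, `b = -4 a l^4`. -/
noncomputable def phiFun (a b l : ℚ) (hb : b ≠ 0) (h : b = -4 * a * l ^ 4) :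
    (EDcurve a).Point → (EDcurve b).Point
  | .zero => 0
  | .some x y hxy => if hx : x = 0 then 0 else
      .some _ _ (nonsing hb (phi_eqn h hx (eqn_of hxy)))

section
variable {a b l : ℚ} (hb : b ≠ 0) (h : b = -4 * a * l ^ 4)

lemma phiFun_zero : phiFun a b l hb h 0 = 0 := rfl

lemma phiFun_T {y : ℚ} (hxy : (EDcurve a).Nonsingular 0 y) :
    phiFun a b l hb h (.some 0 y hxy) = 0 := by simp [phiFun]

lemma phiFun_some {x y u v : ℚ} (hxy : (EDcurve a).Nonsingular x y) (hx : x ≠ 0)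
    (hu : u = l ^ 2 * (x + a / x)) (hv : v = l ^ 3 * (y * (a - x ^ 2) / x ^ 2)) :
    ∃ huv, phiFun a b l hb h (.some x y hxy) = .some u v huv := by
  subst hu hv
  exact ⟨nonsing hb (phi_eqn h hx (eqn_of hxy)), by simp [phiFun, hx]⟩

lemma phiFun_neg (P : (EDcurve a).Point) :
    phiFun a b l hb h (-P) = - phiFun a b l hb h P := by
  rcases P with _ | ⟨x, y, hxy⟩
  · rw [← Point.zero_def, neg_zero, phiFun_zero, neg_zero]
  have hn : (EDcurve a).Nonsingular x (-y) := by
    rw [← negY_eq a x y]; exact (nonsingular_neg _ _).2 hxy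
  rw [neg_some' hxy hn]
  by_cases hx : x = 0
  · subst hx; rw [phiFun_T, phiFun_T, neg_zero]
  · obtain ⟨h1, e1⟩ := phiFun_some hb h hxy hx rfl rfl
    obtain ⟨h2, e2⟩ := phiFun_some hb h hn hx rfl rfl
    rw [e1, e2, Point.neg_some]
    apply some_congr _ _ rfl
    rw [negY_eq]; ring

lemma Line.zero {a m c x2 x3 : ℚ} (L : Line a m c 0 x2 x3) : c = 0 ∧ x2 * x3 = a ∧
    x2 + x3 = m ^ 2 := by
  obtain ⟨s1, s2, s3⟩ := L
  have : c = 0 := by simpa using s3.symm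
  subst this
  exact ⟨rfl, by linarith, by linarith⟩

lemma phi_line_T {m c x2 x3 y1 y2 y3 : ℚ} (L : Line a m c 0 x2 x3)
    (e2 : y2 = m * x2 + c) (e3 : y3 = m * x3 + c)
    (h1 : (EDcurve a).Nonsingular 0 y1) (h2 : (EDcurve a).Nonsingular x2 y2)
    (h3 : (EDcurve a).Nonsingular x3 y3) :
    phiFun a b l hb h (.some 0 y1 h1) + phiFun a b l hb h (.some x2 y2 h2)
      + phiFun a b l hb h (.some x3 y3 h3) = 0 := by
  obtain ⟨rfl, t2, -⟩ := L.zero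
  have ha : a ≠ 0 := by rintro rfl; apply hb; rw [h]; ring
  have hx2 : x2 ≠ 0 := by rintro rfl; apply ha; rw [← t2]; ring
  have hx3 : x3 ≠ 0 := by rintro rfl; apply ha; rw [← t2]; ring
  obtain ⟨k2, f2⟩ := phiFun_some hb h h2 hx2 rfl rfl
  obtain ⟨k3, f3⟩ := phiFun_some hb h h3 hx3 rfl rfl
  rw [phiFun_T, zero_add, f2, f3, ← eq_neg_iff_add_eq_zero, Point.neg_some]
  apply some_congr
  · rw [← t2]; field_simp; ring
  · rw [negY_eq, e2, e3, ← t2]; field_simp; ring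

lemma phi_line {m c x1 x2 x3 y1 y2 y3 : ℚ} (L : Line a m c x1 x2 x3)
    (e1 : y1 = m * x1 + c) (e2 : y2 = m * x2 + c) (e3 : y3 = m * x3 + c)
    (h1 : (EDcurve a).Nonsingular x1 y1) (h2 : (EDcurve a).Nonsingular x2 y2)
    (h3 : (EDcurve a).Nonsingular x3 y3) :
    phiFun a b l hb h (.some x1 y1 h1) + phiFun a b l hb h (.some x2 y2 h2)
      + phiFun a b l hb h (.some x3 y3 h3) = 0 := by
  by_cases hx1 : x1 = 0
  · subst hx1; exact phi_line_T hb h L e2 e3 h1 h2 h3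
  by_cases hx2 : x2 = 0
  · subst hx2; rw [← phi_line_T hb h L.rot e3 e1 h2 h3 h1]; abel
  by_cases hx3 : x3 = 0
  · subst hx3; rw [← phi_line_T hb h L.rot.rot e1 e2 h3 h1 h2]; abel
  obtain ⟨k1, f1⟩ := phiFun_some hb h h1 hx1 rfl rfl
  obtain ⟨k2, f2⟩ := phiFun_some hb h h2 hx2 rfl rfl
  obtain ⟨k3, f3⟩ := phiFun_some hb h h3 hx3 rfl rfl
  rw [f1, f2, f3]
  have hc : c ≠ 0 := by
    rintro rfl
    have := L.s3
    simp [hx1, hx2, hx3] at this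
  obtain ⟨s1, s2, s3⟩ := L
  have key : ∀ x y : ℚ, x ≠ 0 → y ^ 2 = x ^ 3 + a * x → y = m * x + c →
      l ^ 3 * (y * (a - x ^ 2) / x ^ 2) =
        (l * ((a - m * c) / c)) * (l ^ 2 * (x + a / x)) + l ^ 3 * (-(m ^ 2 * a + c ^ 2) / c) := by
    intro x y hx e hy
    subst hy
    field_simp
    linear_combination (l ^ 3 * a) * e
  refine sum_zero hb (m := l * ((a - m * c) / c)) (c := l ^ 3 * (-(m ^ 2 * a + c ^ 2) / c))
    ⟨?_, ?_, ?_⟩ (key _ _ hx1 (eqn_of h1) e1) (key _ _ hx2 (eqn_of h2) e2)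
    (key _ _ hx3 (eqn_of h3) e3) k1 k2 k3
  · have : l ^ 2 * (x1 + a / x1) + l ^ 2 * (x2 + a / x2) + l ^ 2 * (x3 + a / x3) =
        l ^ 2 * ((x1 + x2 + x3) + a * (x1 * x2 + x1 * x3 + x2 * x3) / (x1 * x2 * x3)) := by
      field_simp; ring
    rw [this, s1, s2, s3]; field_simp; ring
  · have : l ^ 2 * (x1 + a / x1) * (l ^ 2 * (x2 + a / x2)) +
        l ^ 2 * (x1 + a / x1) * (l ^ 2 * (x3 + a / x3)) +
        l ^ 2 * (x2 + a / x2) * (l ^ 2 * (x3 + a / x3)) =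
        l ^ 4 * ((x1 * x2 + x1 * x3 + x2 * x3) + a * ((x1 + x2 + x3) *
          (x1 * x2 + x1 * x3 + x2 * x3) - 3 * (x1 * x2 * x3)) / (x1 * x2 * x3) +
          a ^ 2 * (x1 + x2 + x3) / (x1 * x2 * x3)) := by
      field_simp; ring
    rw [this, s1, s2, s3, h]; field_simp; ring
  · have : l ^ 2 * (x1 + a / x1) * (l ^ 2 * (x2 + a / x2)) * (l ^ 2 * (x3 + a / x3)) =
        l ^ 6 * (((x1 * x2 * x3) ^ 2 + a * ((x1 * x2 + x1 * x3 + x2 * x3) ^ 2 -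
          2 * (x1 + x2 + x3) * (x1 * x2 * x3)) + a ^ 2 * ((x1 + x2 + x3) ^ 2 -
          2 * (x1 * x2 + x1 * x3 + x2 * x3)) + a ^ 3) / (x1 * x2 * x3)) := by
      field_simp; ring
    rw [this, s1, s2, s3]; field_simp; ring

/-- The isogeny as a homomorphism. -/
noncomputable def phi : (EDcurve a).Point →+ (EDcurve b).Point where
  toFun := phiFun a b l hb h
  map_zero' := phiFun_zero hb h
  map_add' := additive_of_lines _ (phiFun_zero hb h) (phiFun_neg hb h)
    fun _ _ _ _ _ _ _ _ L e1 e2 e3 h1 h2 h3 => phi_line hb h L e1 e2 e3 h1 h2 h3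

lemma phi_apply (P : (EDcurve a).Point) : phi hb h P = phiFun a b l hb h P := rfl

/-- Points with square abscissa are in the image. -/
lemma mem_range_of_sq (ha : a ≠ 0) (hl : l ≠ 0) {s x y : ℚ} (hs : s ≠ 0)
    (hxy : (EDcurve b).Nonsingular x y) (hx : x = s ^ 2) :
    Point.some x y hxy ∈ (phi hb h).range := by
  have e := eqn_of hxy
  subst hx
  have e' : (y / s) ^ 2 = s ^ 4 + b := by field_simp; rw [e]; ring
  obtain ⟨t, rfl⟩ : ∃ t, y = t * s := ⟨y / s, by field_simp⟩
  rw [mul_div_assoc, div_self hs, mul_one] at e'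
  set X := (s ^ 2 - t) / (2 * l ^ 2) with hX
  have hq : X ^ 2 + a = X * (s ^ 2 / l ^ 2) := by
    rw [hX]; field_simp; linear_combination e' + h
  have hX0 : X ≠ 0 := by
    intro h0; rw [h0] at hq; apply ha; linarith
  have hn : (EDcurve a).Nonsingular X (s * X / l) := by
    apply nonsing ha
    have : X ^ 3 + a * X = X * (X ^ 2 + a) := by ring
    rw [this, hq]; field_simp
  have haX : a / X = s ^ 2 / l ^ 2 - X := by
    rw [div_eq_iff hX0]; linear_combination hq
  refine ⟨.some X (s * X / l) hn, ?_⟩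
  obtain ⟨k, f⟩ := phiFun_some hb h hn hX0 rfl rfl
  rw [phi_apply, f]
  apply some_congr
  · rw [haX]; field_simp; ring
  · have : l ^ 3 * (s * X / l * (a - X ^ 2) / X ^ 2) = l ^ 2 * s * (a / X - X) := by
      field_simp
    rw [this, haX, hX]; field_simp; ring

lemma mem_range_T (ha : a ≠ 0) (hl : l ≠ 0) {s y : ℚ}
    (hxy : (EDcurve b).Nonsingular 0 y) (hx : b = s ^ 2) :
    Point.some 0 y hxy ∈ (phi hb h).range := by
  have e := eqn_of hxy
  have hy : y = 0 := by simpa using e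
  subst hy
  have hs : s ≠ 0 := by rintro rfl; apply hb; rw [hx]; ring
  have haX : a = - (s / (2 * l ^ 2)) ^ 2 := by
    field_simp; linarith
  have hX0 : s / (2 * l ^ 2) ≠ 0 := by positivity
  have hn : (EDcurve a).Nonsingular (s / (2 * l ^ 2)) 0 := by
    apply nonsing ha
    rw [haX]; ring
  refine ⟨.some _ _ hn, ?_⟩
  obtain ⟨k, f⟩ := phiFun_some hb h hn hX0 rfl rfl
  rw [phi_apply, f]
  apply some_congr
  · rw [haX]; field_simp; ring
  · ring

end

lemma psi_phi {a b : ℚ} (ha : a ≠ 0) (hb : b ≠ 0) (h : b = -4 * a * 1 ^ 4)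
    (h' : a = -4 * b * (1 / 2) ^ 4) (P : (EDcurve a).Point) :
    phi ha h' (phi hb h P) = 2 • P := by
  rw [two_smul]
  rcases P with _ | ⟨x, y, hxy⟩
  · rw [← Point.zero_def, map_zero, map_zero, add_zero]
  have e := eqn_of hxy
  by_cases hy : y = 0
  · subst hy
    have h2 : Point.some x 0 hxy + Point.some x 0 hxy = 0 :=
      Point.add_self_of_Y_eq (by rw [negY_eq, neg_zero])
    rw [h2]
    by_cases hx : x = 0
    · subst hx
      rw [phi_apply hb, phiFun_T, map_zero]
    · have : x + a / x = 0 := by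
        field_simp
        have : x * (x ^ 2 + a) = 0 := by linarith
        simpa [hx] using this
      obtain ⟨k, f⟩ := phiFun_some hb h hxy hx (u := 0) (by rw [this]; ring) rfl
      rw [phi_apply hb, f, phi_apply, phiFun_T]
  have hx : x ≠ 0 := by
    rintro rfl; apply hy; simpa using e
  have hU : x + a / x = y ^ 2 / x ^ 2 := by rw [e]; field_simp
  obtain ⟨k, f⟩ := phiFun_some hb h hxy hx (u := y ^ 2 / x ^ 2) (v := y * (a - x ^ 2) / x ^ 2)
    (by rw [hU]; ring) (by ring)
  obtain ⟨k', f'⟩ := phiFun_some ha h' k (by positivity) (u := ((a - x ^ 2) / (2 * y)) ^ 2)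
    (v := (a - x ^ 2) * (b * x ^ 4 - y ^ 4) / (8 * y ^ 3 * x ^ 2))
    (by
      rw [h]; field_simp
      have : y ^ 4 = (x ^ 3 + a * x) ^ 2 := by rw [← e]; ring
      rw [this]; ring)
    (by field_simp; norm_num)
  rw [phi_apply hb, f, phi_apply, f']
  rw [eq_comm, ← neg_neg (Point.some _ _ k'), ← add_eq_zero_iff_eq_neg]
  have k'' := (nonsingular_neg _ _).2 k'
  rw [Point.neg_some]
  have y4 : y ^ 4 = (x ^ 3 + a * x) ^ 2 := by rw [← e]; ring
  refine sum_zero ha (m := (3 * x ^ 2 + a) / (2 * y)) (c := y - (3 * x ^ 2 + a) / (2 * y) * x)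
    ⟨?_, ?_, ?_⟩ (by ring) (by ring) ?_ _ _ _
  · field_simp; rw [e]; ring
  · field_simp; rw [e]; ring
  · field_simp; rw [e]; ring
  · rw [negY_eq, h]; field_simp; rw [y4, e]; ring

end ED

namespace ED

/-- The descent map attached to a multiplicative function. -/
noncomputable def alphaFun (a : ℚ) {A : Type*} [AddCommGroup A] (χ : ℚ → A) :
    (EDcurve a).Point → A
  | .zero => 0
  | .some x _ _ => if x = 0 then χ a else χ x

section
variable {a : ℚ} {A : Type*} [AddCommGroup A]

lemma alpha_line_T (ha : a ≠ 0) (χ : ℚ → A)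
    (hχ : ∀ x y, x ≠ 0 → y ≠ 0 → χ (x * y) = χ x + χ y) (hh : ∀ z : A, z + z = 0)
    {m c x2 x3 y1 y2 y3 : ℚ} (L : Line a m c 0 x2 x3)
    (h1 : (EDcurve a).Nonsingular 0 y1) (h2 : (EDcurve a).Nonsingular x2 y2)
    (h3 : (EDcurve a).Nonsingular x3 y3) :
    alphaFun a χ (.some 0 y1 h1) + alphaFun a χ (.some x2 y2 h2)
      + alphaFun a χ (.some x3 y3 h3) = 0 := by
  obtain ⟨rfl, t2, -⟩ := L.zero
  have hx2 : x2 ≠ 0 := by rintro rfl; apply ha; rw [← t2]; ring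
  have hx3 : x3 ≠ 0 := by rintro rfl; apply ha; rw [← t2]; ring
  simp only [alphaFun, hx2, hx3, if_true, if_false]
  rw [← t2, hχ _ _ hx2 hx3, add_assoc]
  apply hh

lemma alpha_line (ha : a ≠ 0) (χ : ℚ → A)
    (hχ : ∀ x y, x ≠ 0 → y ≠ 0 → χ (x * y) = χ x + χ y) (hh : ∀ z : A, z + z = 0)
    {m c x1 x2 x3 y1 y2 y3 : ℚ} (L : Line a m c x1 x2 x3)
    (h1 : (EDcurve a).Nonsingular x1 y1) (h2 : (EDcurve a).Nonsingular x2 y2)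
    (h3 : (EDcurve a).Nonsingular x3 y3) :
    alphaFun a χ (.some x1 y1 h1) + alphaFun a χ (.some x2 y2 h2)
      + alphaFun a χ (.some x3 y3 h3) = 0 := by
  by_cases hx1 : x1 = 0
  · subst hx1; exact alpha_line_T ha χ hχ hh L h1 h2 h3
  by_cases hx2 : x2 = 0
  · subst hx2; rw [← alpha_line_T ha χ hχ hh L.rot h2 h3 h1]; abel
  by_cases hx3 : x3 = 0
  · subst hx3; rw [← alpha_line_T ha χ hχ hh L.rot.rot h3 h1 h2]; abel
  have hc : c ≠ 0 := by
    rintro rfl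
    have := L.s3
    simp [hx1, hx2, hx3] at this
  simp only [alphaFun, hx1, hx2, hx3, if_false]
  rw [← hχ _ _ hx1 hx2, ← hχ _ _ (mul_ne_zero hx1 hx2) hx3, L.s3, sq, hχ _ _ hc hc]
  apply hh

/-- The descent homomorphism. -/
noncomputable def alpha (ha : a ≠ 0) (χ : ℚ → A)
    (hχ : ∀ x y, x ≠ 0 → y ≠ 0 → χ (x * y) = χ x + χ y) (h2 : ∀ z : A, z + z = 0) : (EDcurve a).Point →+ A where
  toFun := alphaFun a χ
  map_zero' := rfl
  map_add' := additive_of_lines _ rfl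
    (fun P => by
      have : alphaFun a χ (-P) = alphaFun a χ P := by cases P <;> rfl
      rw [this, eq_neg_iff_add_eq_zero]; apply h2)
    fun _ _ _ _ _ _ _ _ L _ _ _ h1 h2' h3 => alpha_line ha χ hχ h2 L h1 h2' h3

end

lemma nat_isSquare {n : ℕ} (hn : n ≠ 0) (h : ∀ p, p.Prime → Even (n.factorization p)) :
    IsSquare n := by
  refine ⟨n.factorization.prod fun p k => p ^ (k / 2), ?_⟩
  conv_lhs => rw [← Nat.prod_factorization_pow_eq_self hn]
  rw [← Finsupp.prod_mul]
  apply Finsupp.prod_congr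
  intro p hp
  obtain ⟨k, hk⟩ := h p (Nat.prime_of_mem_primeFactors (by simpa using hp))
  rw [hk, ← pow_add]; congr 1; omega

lemma rat_isSquare {x : ℚ} (hx : 0 < x) (h : ∀ p : ℕ, p.Prime → Even (padicValRat p x)) :
    ∃ s : ℚ, x = s ^ 2 := by
  have hnum : 0 < x.num := Rat.num_pos.2 hx
  have hden : x.den ≠ 0 := x.den_nz
  have hn0 : x.num.natAbs * x.den ≠ 0 := mul_ne_zero (by omega) hden
  have hq : ((x.num.natAbs * x.den : ℕ) : ℚ) = x * (x.den : ℚ) ^ 2 := by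
    have : ((x.num.natAbs : ℕ) : ℚ) = x.num := by
      rw [Nat.cast_natAbs, abs_of_pos hnum]
    push_cast
    rw [this]
    nth_rewrite 3 [← Rat.num_div_den x]
    field_simp
  obtain ⟨r, hr⟩ : IsSquare (x.num.natAbs * x.den) := by
    apply nat_isSquare hn0
    intro p hp
    have := Fact.mk hp
    have hd : (x.den : ℚ) ≠ 0 := by exact_mod_cast hden
    have : (((x.num.natAbs * x.den).factorization p : ℕ) : ℤ) =
        padicValRat p x + 2 * padicValRat p (x.den : ℚ) := by
      rw [Nat.factorization_def _ hp, padicValRat_of_nat, hq, padicValRat.mul hx.ne' (pow_ne_zero _ hd),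
        padicValRat.pow]
      rfl
    have he : Even (((x.num.natAbs * x.den).factorization p : ℕ) : ℤ) := by
      rw [this]; exact (h p hp).add (even_two_mul _)
    exact_mod_cast he
  refine ⟨r / x.den, ?_⟩
  rw [hr] at hq
  push_cast at hq
  have hd : (x.den : ℚ) ≠ 0 := by exact_mod_cast hden
  field_simp
  linarith

lemma even_val {a : ℤ} (ha : a ≠ 0) {p : ℕ} (hp : p.Prime) (hpa : ¬ (p : ℤ) ∣ a) {x y : ℚ}
    (hx : x ≠ 0) (e : y ^ 2 = x ^ 3 + a * x) : Even (padicValRat p x) := by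
  have := Fact.mk hp
  have haQ : (a : ℚ) ≠ 0 := by exact_mod_cast ha
  have va : padicValRat p (a : ℚ) = 0 := by
    rw [padicValRat.of_int, padicValInt.eq_zero_of_not_dvd hpa]; rfl
  have vx2 : padicValRat p (x ^ 2) = 2 * padicValRat p x := by
    rw [padicValRat.pow]; rfl
  have e' : y ^ 2 = x * (x ^ 2 + a) := by rw [e]; ring
  by_cases hs : x ^ 2 + (a : ℚ) = 0
  · have : x ^ 2 = -(a : ℚ) := by linarith
    rw [this, padicValRat.neg, va] at vx2
    have : padicValRat p x = 0 := by omega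
    rw [this]; exact Even.zero
  have hy : 2 * padicValRat p y = padicValRat p x + padicValRat p (x ^ 2 + a) := by
    rw [← padicValRat.mul hx hs, ← e', padicValRat.pow]; rfl
  by_cases h0 : padicValRat p x = 0
  · rw [h0]; exact Even.zero
  have := padicValRat.add_eq_min (p := p) hs (pow_ne_zero 2 hx) haQ (by rw [vx2, va]; omega)
  rw [this, vx2, va] at hy
  rw [Int.even_iff]
  omega

/-- Valuation parities. -/
noncomputable def chi (S : Finset ℕ) (x : ℚ) : S → ZMod 2 :=
  fun p => ((padicValRat p x : ℤ) : ZMod 2)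

/-- Sign parity. -/
noncomputable def sgn (x : ℚ) : ZMod 2 := if 0 < x then 0 else 1

lemma sgn_mul (x y : ℚ) (hx : x ≠ 0) (hy : y ≠ 0) : sgn (x * y) = sgn x + sgn y := by
  unfold sgn
  rcases lt_or_gt_of_ne hx with h | h <;> rcases lt_or_gt_of_ne hy with h' | h'
  · rw [if_pos (mul_pos_of_neg_of_neg h h'), if_neg h.not_gt, if_neg h'.not_gt]; decide
  · rw [if_neg (mul_neg_of_neg_of_pos h h').not_gt, if_neg h.not_gt, if_pos h']; decide
  · rw [if_neg (mul_neg_of_pos_of_neg h h').not_gt, if_neg h'.not_gt, if_pos h]; decide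
  · rw [if_pos (mul_pos h h'), if_pos h, if_pos h']; decide

lemma chi_mul (S : Finset ℕ) (hS : ∀ p ∈ S, p.Prime) (x y : ℚ) (hx : x ≠ 0) (hy : y ≠ 0) :
    chi S (x * y) = chi S x + chi S y := by
  funext p
  have := Fact.mk (hS p p.2)
  simp [chi, padicValRat.mul hx hy]

lemma chi_even {S : Finset ℕ} {x : ℚ} (h : chi S x = 0) {p : ℕ} (hp : p ∈ S) :
    Even (padicValRat p x) := by
  have := congrFun h ⟨p, hp⟩
  simp only [chi, Pi.zero_apply] at this
  rw [even_iff_two_dvd]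
  exact_mod_cast (ZMod.intCast_zmod_eq_zero_iff_dvd _ 2).1 this

/-- Common part of the kernel computation. -/
lemma ker_mem {a : ℤ} (ha : a ≠ 0) {b l : ℚ} (hb : b ≠ 0) (hl : l ≠ 0)
    (haQ : (a : ℚ) ≠ 0) (h : (a : ℚ) = -4 * b * l ^ 4)
    {S : Finset ℕ} (hSa : ∀ p : ℕ, p.Prime → (p : ℤ) ∣ a → p ∈ S)
    {x y : ℚ} (hxy : (EDcurve (a : ℚ)).Nonsingular x y)
    (hpos : 0 < if x = 0 then (a : ℚ) else x) (hc : chi S (if x = 0 then (a : ℚ) else x) = 0) :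
    Point.some x y hxy ∈ (phi haQ h).range := by
  by_cases hx : x = 0
  · subst hx
    simp only [if_true] at hpos hc
    obtain ⟨s, hs⟩ := rat_isSquare hpos (fun p hp => by
      by_cases hpa : (p : ℤ) ∣ a
      · exact chi_even hc (hSa p hp hpa)
      · rw [padicValRat.of_int, padicValInt.eq_zero_of_not_dvd hpa]; exact Even.zero)
    exact mem_range_T haQ h hb hl hxy hs
  · simp only [hx, if_false] at hpos hc
    obtain ⟨s, hs⟩ := rat_isSquare hpos (fun p hp => by
      by_cases hpa : (p : ℤ) ∣ a
      · exact chi_even hc (hSa p hp hpa)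
      · exact even_val ha hp hpa hx (eqn_of hxy))
    refine mem_range_of_sq haQ h hb hl ?_ hxy hs
    rintro rfl; apply hx; rw [hs]; ring

lemma index_bound {a : ℤ} (ha : a ≠ 0) {b l : ℚ} (hb : b ≠ 0) (hl : l ≠ 0)
    (haQ : (a : ℚ) ≠ 0) (h : (a : ℚ) = -4 * b * l ^ 4)
    {S : Finset ℕ} (hS : ∀ p ∈ S, p.Prime) (hSa : ∀ p : ℕ, p.Prime → (p : ℤ) ∣ a → p ∈ S) :
    (phi haQ h).range.index ∣ 2 ^ (S.card + if 0 < a then 0 else 1) := by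
  have two : ∀ z : ZMod 2, z + z = 0 := by decide
  by_cases hpos : 0 < a
  · let f := alpha haQ (chi S) (chi_mul S hS) (fun z => funext fun i => two _)
    have hk : f.ker ≤ (phi haQ h).range := by
      intro P hP
      rcases P with _ | ⟨x, y, hxy⟩
      · exact zero_mem _
      have hP' : chi S (if x = 0 then (a : ℚ) else x) = 0 := by
        rw [apply_ite (chi S)]; exact hP
      refine ker_mem ha hb hl haQ h hSa hxy ?_ hP'
      have haP : (0 : ℚ) < a := by exact_mod_cast hpos
      split_ifs with hx
      · exact haP
      · have e := eqn_of hxy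
        have : 0 ≤ x * (x ^ 2 + a) := by nlinarith [sq_nonneg y]
        have := nonneg_of_mul_nonneg_left this (by positivity)
        exact lt_of_le_of_ne this (Ne.symm hx)
    refine (AddSubgroup.index_dvd_of_le hk).trans ?_
    rw [AddSubgroup.index_ker]
    refine (AddSubgroup.card_addSubgroup_dvd_card _).trans ?_
    simp [hpos]
  · let f := alpha haQ (fun x => (chi S x, sgn x))
      (fun x y hx hy => by rw [chi_mul S hS x y hx hy, sgn_mul x y hx hy]; rfl)
      (fun z => Prod.ext (funext fun i => two _) (two _))
    have hk : f.ker ≤ (phi haQ h).range := by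
      intro P hP
      rcases P with _ | ⟨x, y, hxy⟩
      · exact zero_mem _
      have hP' : (fun x => (chi S x, sgn x)) (if x = 0 then (a : ℚ) else x) = 0 := by
        exact (apply_ite (fun x => (chi S x, sgn x)) _ _ _).trans hP
      simp only [Prod.mk_eq_zero] at hP'
      refine ker_mem ha hb hl haQ h hSa hxy ?_ hP'.1
      by_contra hcon
      have := hP'.2
      rw [sgn, if_neg hcon] at this
      exact absurd this (by decide)
    refine (AddSubgroup.index_dvd_of_le hk).trans ?_
    rw [AddSubgroup.index_ker]
    refine (AddSubgroup.card_addSubgroup_dvd_card _).trans ?_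
    simp [hpos, pow_succ]

end ED

/-- For `D` a nonzero fourth-power-free integer and `ν(2D)` the number of distinct
prime divisors of `2D`, the group `E_D(ℚ)/2E_D(ℚ)` is finite of order at most
`2 ^ (2·ν(2D) + 1)`. -/
theorem stmt5 (D : ℤ) (hD : D ≠ 0) (hfree : ∀ q : ℤ, Prime q → ¬ q ^ 4 ∣ D) :
    Finite ((EDcurve (D : ℚ)).Point ⧸ twoSub (EDcurve (D : ℚ)).Point) ∧
      Nat.card ((EDcurve (D : ℚ)).Point ⧸ twoSub (EDcurve (D : ℚ)).Point) ≤
        2 ^ (2 * (2 * D).natAbs.primeFactors.card + 1) := by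
  set S := (2 * D).natAbs.primeFactors with hSdef
  have hS : ∀ p ∈ S, p.Prime := fun p hp => Nat.prime_of_mem_primeFactors hp
  have hmem : ∀ p : ℕ, p.Prime → (p : ℤ) ∣ 2 * D → p ∈ S := by
    intro p hp hd
    rw [hSdef, Nat.mem_primeFactors]
    exact ⟨hp, Int.natCast_dvd.1 hd, by simpa using hD⟩
  have hSa : ∀ p : ℕ, p.Prime → (p : ℤ) ∣ D → p ∈ S := fun p hp hd =>
    hmem p hp (hd.mul_left 2)
  have hSb : ∀ p : ℕ, p.Prime → (p : ℤ) ∣ (-4 * D) → p ∈ S := by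
    intro p hp hd
    have hpp : Prime (p : ℤ) := Nat.prime_iff_prime_int.1 hp
    rcases hpp.dvd_or_dvd hd with h | h
    · apply hmem p hp
      have : (p : ℤ) ∣ 2 ^ 2 := by
        have h4 : (-4 : ℤ) = -(2 ^ 2) := by norm_num
        rw [h4] at h
        exact (dvd_neg).1 h
      exact (hpp.dvd_of_dvd_pow this).mul_right D
    · exact hSa p hp h
  have hDQ : (D : ℚ) ≠ 0 := by exact_mod_cast hD
  have hb : (-4 * D) ≠ 0 := by omega
  have hbQ : ((-4 * D : ℤ) : ℚ) ≠ 0 := by exact_mod_cast hb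
  have h : ((-4 * D : ℤ) : ℚ) = -4 * (D : ℚ) * 1 ^ 4 := by push_cast; ring
  have h' : (D : ℚ) = -4 * ((-4 * D : ℤ) : ℚ) * (1 / 2) ^ 4 := by push_cast; ring
  have i1 := ED.index_bound hD hbQ (by norm_num) hDQ h' hS hSa
  have i2 := ED.index_bound hb hDQ one_ne_zero hbQ h hS hSb
  have hle : (ED.phi hbQ h).range.map (ED.phi hDQ h') ≤ twoSub (EDcurve (D : ℚ)).Point := by
    rintro _ ⟨_, ⟨P, rfl⟩, rfl⟩
    refine ⟨P, ?_⟩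
    rw [ED.psi_phi hDQ hbQ h h' P]; rfl
  have hdvd : (twoSub (EDcurve (D : ℚ)).Point).index ∣ 2 ^ (2 * S.card + 1) := by
    refine (AddSubgroup.index_dvd_of_le hle).trans ?_
    rw [AddSubgroup.index_map]
    refine (mul_dvd_mul ((AddSubgroup.index_dvd_of_le le_sup_left).trans i2) i1).trans ?_
    rw [← pow_add]
    apply pow_dvd_pow
    split_ifs <;> omega
  have hne : (twoSub (EDcurve (D : ℚ)).Point).index ≠ 0 :=
    ne_zero_of_dvd_ne_zero (by positivity) hdvd
  have : (twoSub (EDcurve (D : ℚ)).Point).FiniteIndex := ⟨hne⟩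
  exact ⟨AddSubgroup.finite_quotient_of_finiteIndex,
    Nat.le_of_dvd (by positivity) hdvd⟩
end

section
/- Let p be an odd prime. Then there are no W, Z in the field ℚ₂ of 2-adic numbers satisfying 2·W² = 4 + p·Z⁴. -/
lemma val_eq_of_norm_eq {x y : ℚ_[2]} (hx : x ≠ 0) (hy : y ≠ 0) (h : ‖x‖ = ‖y‖) :
    x.valuation = y.valuation := by
  rw [Padic.norm_eq_zpow_neg_valuation hx, Padic.norm_eq_zpow_neg_valuation hy] at h
  have := zpow_right_injective₀ (a := ((2 : ℕ) : ℝ)) (by norm_num) (by norm_num) h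
  simpa using this

/-- For an odd prime `p`, the equation `2·W² = 4 + p·Z⁴` has no solutions in the
field `ℚ₂` of 2-adic numbers. -/
theorem stmt7 (p : ℕ) (hp : p.Prime) (hodd : p ≠ 2) :
    ¬ ∃ W Z : ℚ_[2], 2 * W ^ 2 = 4 + (p : ℚ_[2]) * Z ^ 4 := by
  rintro ⟨W, Z, h⟩
  have h20 : (2 : ℚ_[2]) ≠ 0 := by norm_num
  have h40 : (4 : ℚ_[2]) ≠ 0 := by norm_num
  have hp0 : (p : ℚ_[2]) ≠ 0 := by exact_mod_cast hp.ne_zero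
  have v2 : (2 : ℚ_[2]).valuation = 1 := by simpa using Padic.valuation_p (p := 2)
  have v4 : (4 : ℚ_[2]).valuation = 2 := by
    have : (4 : ℚ_[2]) = 2 ^ 2 := by norm_num
    rw [this, Padic.valuation_pow, v2]; norm_num
  have vp : (p : ℚ_[2]).valuation = 0 := by
    rw [Padic.valuation_natCast]
    have : ¬ 2 ∣ p := fun hd => hodd ((Nat.prime_dvd_prime_iff_eq Nat.prime_two hp).1 hd).symm
    exact_mod_cast padicValNat.eq_zero_of_not_dvd this
  have vW : W ≠ 0 → (2 * W ^ 2).valuation = 1 + 2 * W.valuation := fun hW => by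
    rw [Padic.valuation_mul h20 (pow_ne_zero _ hW), Padic.valuation_pow, v2]; norm_num
  have vZ : Z ≠ 0 → ((p : ℚ_[2]) * Z ^ 4).valuation = 4 * Z.valuation := fun hZ => by
    rw [Padic.valuation_mul hp0 (pow_ne_zero _ hZ), Padic.valuation_pow, vp]; norm_num
  have hne : ‖(4 : ℚ_[2])‖ ≠ ‖(p : ℚ_[2]) * Z ^ 4‖ := by
    intro he
    have hZ : Z ≠ 0 := by
      rintro rfl
      simp at he
    have := val_eq_of_norm_eq h40 (mul_ne_zero hp0 (pow_ne_zero _ hZ)) he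
    rw [v4, vZ hZ] at this
    omega
  have hmax := Padic.add_eq_max_of_ne hne
  rw [← h] at hmax
  have h4pos : 0 < ‖(4 : ℚ_[2])‖ := norm_pos_iff.2 h40
  have hW : W ≠ 0 := by
    rintro rfl
    have := le_max_left ‖(4 : ℚ_[2])‖ ‖(p : ℚ_[2]) * Z ^ 4‖
    rw [← hmax] at this
    simp at this
  have hW2 : 2 * W ^ 2 ≠ 0 := mul_ne_zero h20 (pow_ne_zero _ hW)
  rcases max_choice ‖(4 : ℚ_[2])‖ ‖(p : ℚ_[2]) * Z ^ 4‖ with hm | hm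
  · have := val_eq_of_norm_eq hW2 h40 (hmax.trans hm)
    rw [v4, vW hW] at this
    omega
  · have he := hmax.trans hm
    have hZ : Z ≠ 0 := by
      rintro rfl
      have h0 : ‖2 * W ^ 2‖ = 0 := by rw [he]; simp
      exact hW2 (norm_eq_zero.1 h0)
    have := val_eq_of_norm_eq hW2 (mul_ne_zero hp0 (pow_ne_zero _ hZ)) he
    rw [vW hW, vZ hZ] at this
    omega
end

section
/- Let p be an odd prime. Then there exist z, w in the field ℚ_p of p-adic numbers satisfying w² = 4·p·z⁴ − 1 if and only if p ≡ 1 (mod 4). -/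
/-- For an odd prime `p`, the equation `w² = 4·p·z⁴ − 1` has a solution in the field
`ℚ_p` of `p`-adic numbers if and only if `p ≡ 1 (mod 4)`. -/
theorem stmt8 (p : ℕ) [Fact p.Prime] (hodd : p ≠ 2) :
    (∃ z w : ℚ_[p], w ^ 2 = 4 * (p : ℚ_[p]) * z ^ 4 - 1) ↔ p % 4 = 1 := by
  have hp : p.Prime := Fact.out
  have hp2 : p % 2 = 1 := hp.eq_two_or_odd.resolve_left hodd
  have hp0 : (p : ℚ_[p]) ≠ 0 := by exact_mod_cast hp.ne_zero
  have hp1 : (1 : ℝ) < p := by exact_mod_cast hp.one_lt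
  constructor
  · rintro ⟨z, w, h⟩
    have hu : w ^ 2 + 1 = p * (2 * z ^ 2) ^ 2 := by rw [h]; ring
    generalize 2 * z ^ 2 = u at hu
    suffices h3 : p % 4 ≠ 3 by omega
    have hval : u ≠ 0 → ‖w ^ 2 + 1‖ = (p : ℝ) ^ (-(1 + 2 * u.valuation)) := by
      intro hu0
      rw [hu, Padic.norm_eq_zpow_neg_valuation (mul_ne_zero hp0 (pow_ne_zero _ hu0)),
        Padic.valuation_mul hp0 (pow_ne_zero _ hu0), Padic.valuation_pow, Padic.valuation_p]
      norm_num
    by_cases hw : ‖w‖ ≤ 1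
    · have hle : ‖w ^ 2 + 1‖ ≤ 1 := by
        refine (Padic.nonarchimedean _ _).trans (max_le ?_ (by simp))
        rw [norm_pow]; exact pow_le_one₀ (norm_nonneg _) hw
      have hlt : ‖w ^ 2 + 1‖ < 1 := by
        refine lt_of_le_of_ne hle fun he => ?_
        by_cases hu0 : u = 0
        · rw [hu, hu0] at he; simp at he
        · rw [hval hu0, zpow_eq_one_iff_right₀ (by positivity) hp1.ne'] at he
          omega
      let W : ℤ_[p] := ⟨w, hw⟩
      have hW : ‖W ^ 2 + 1‖ < 1 := hlt
      have hm : W ^ 2 + 1 ∈ RingHom.ker (PadicInt.toZMod (p := p)) := by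
        rw [PadicInt.ker_toZMod, IsLocalRing.mem_maximalIdeal]
        exact PadicInt.mem_nonunits.2 hW
      rw [RingHom.mem_ker, map_add, map_pow, map_one] at hm
      exact ZMod.mod_four_ne_three_of_sq_eq_neg_one (eq_neg_of_add_eq_zero_left hm)
    · exfalso
      push Not at hw
      have hw0 : w ≠ 0 := by rintro rfl; simp at hw; linarith
      have h1 : 1 < ‖w ^ 2‖ := by rw [norm_pow]; exact one_lt_pow₀ hw (by norm_num)
      have h2 : ‖w ^ 2 + 1‖ = ‖w ^ 2‖ := by
        rw [Padic.add_eq_max_of_ne (by rw [norm_one]; exact h1.ne'), norm_one]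
        exact max_eq_left h1.le
      have hu0 : u ≠ 0 := by
        rintro rfl
        rw [hu] at h2; simp at h2; exact hw0 (by simpa using h2.symm)
      rw [hval hu0, Padic.norm_eq_zpow_neg_valuation (pow_ne_zero _ hw0),
        Padic.valuation_pow] at h2
      have := zpow_right_injective₀ (by positivity) hp1.ne' h2
      push_cast at this
      omega
  · intro h
    obtain ⟨y, hy⟩ := (ZMod.exists_sq_eq_neg_one_iff (p := p)).2 (by omega)
    obtain ⟨a, rfl⟩ := ZMod.intCast_surjective y
    have hd : (p : ℤ) ∣ a ^ 2 + 1 := by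
      rw [← ZMod.intCast_zmod_eq_zero_iff_dvd]
      push_cast
      rw [pow_two, ← hy]; ring
    have hnd : ¬ (p : ℤ) ∣ 2 * a := by
      intro hc
      have hpi : Prime (p : ℤ) := Nat.prime_iff_prime_int.1 hp
      rcases hpi.dvd_or_dvd hc with h2 | h2
      · have : p ∣ 2 := by exact_mod_cast h2
        exact hodd ((Nat.prime_dvd_prime_iff_eq hp Nat.prime_two).1 this)
      · have : (p : ℤ) ∣ 1 := by
          have := dvd_sub hd (dvd_pow h2 (two_ne_zero))
          simpa using this
        exact hpi.not_dvd_one this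
    have hn1 : ‖((2 * a : ℤ) : ℤ_[p])‖ = 1 := by
      refine le_antisymm (PadicInt.norm_le_one _) ?_
      by_contra hc
      exact hnd ((PadicInt.norm_int_lt_one_iff_dvd _).1 (not_le.1 hc))
    have hn2 : ‖((a ^ 2 + 1 : ℤ) : ℤ_[p])‖ < 1 := (PadicInt.norm_int_lt_one_iff_dvd _).2 hd
    push_cast at hn1 hn2
    obtain ⟨x, hx, -⟩ := hensels_lemma (p := p) (R := ℤ_[p])
      (F := (Polynomial.X ^ 2 + 1 : Polynomial ℤ_[p])) (a := (a : ℤ_[p])) (by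
        have e1 : (Polynomial.X ^ 2 + 1 : Polynomial ℤ_[p]).aeval (a : ℤ_[p]) = (a : ℤ_[p]) ^ 2 + 1 := by
          simp
        have e2 : (Polynomial.X ^ 2 + 1 : Polynomial ℤ_[p]).derivative.aeval (a : ℤ_[p])
            = 2 * (a : ℤ_[p]) := by
          simp [Polynomial.derivative_pow]
        rw [e1, e2, hn1]; simpa using hn2)
    have hx' : x ^ 2 + 1 = 0 := by simpa using hx
    refine ⟨0, (x : ℚ_[p]), ?_⟩
    have : ((x ^ 2 + 1 : ℤ_[p]) : ℚ_[p]) = 0 := by rw [hx']; rfl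
    push_cast at this
    rw [eq_neg_of_add_eq_zero_left this]; ring
end

section
/- Let p be a prime with p ≡ 3 (mod 8) or p ≡ 5 (mod 8). Then there are no z, w in the field ℚ_p of p-adic numbers satisfying w² = 2 − 2·p·z⁴. -/
/-- For a prime `p ≡ 3` or `5 (mod 8)`, the equation `w² = 2 − 2·p·z⁴` has no
solutions in the field `ℚ_p` of `p`-adic numbers. -/
theorem stmt9 (p : ℕ) [Fact p.Prime] (h : p % 8 = 3 ∨ p % 8 = 5) :
    ¬ ∃ z w : ℚ_[p], w ^ 2 = 2 - 2 * (p : ℚ_[p]) * z ^ 4 := by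
  rintro ⟨z, w, e⟩
  have hpp : p.Prime := Fact.out
  have hp2 : p ≠ 2 := by rintro rfl; omega
  have hp1 : (1 : ℝ) < p := by exact_mod_cast hpp.one_lt
  have hp0 : (p : ℚ_[p]) ≠ 0 := by exact_mod_cast hpp.ne_zero
  have n2 : ‖(2 : ℚ_[p])‖ = 1 := by
    have := (Padic.norm_natCast_eq_one_iff (p := p) (n := 2)).2
      ((Nat.coprime_primes hpp Nat.prime_two).2 hp2)
    exact_mod_cast this
  by_cases hz : ‖z‖ ≤ 1
  · obtain ⟨Z, rfl⟩ : ∃ Z : ℤ_[p], (Z : ℚ_[p]) = z := ⟨⟨z, hz⟩, rfl⟩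
    have c2 : ((2 : ℤ_[p]) : ℚ_[p]) = 2 := rfl
    have e1 : w ^ 2 = ((2 - 2 * (p : ℤ_[p]) * Z ^ 4 : ℤ_[p]) : ℚ_[p]) := by
      rw [e]; push_cast; rw [c2]
    have hw : ‖w‖ ≤ 1 := by
      have h1 : ‖w ^ 2‖ ≤ 1 := by
        rw [e1]
        exact PadicInt.norm_le_one _
      rw [norm_pow] at h1
      exact (pow_le_one_iff_of_nonneg (norm_nonneg _) two_ne_zero).1 h1
    obtain ⟨W, rfl⟩ : ∃ W : ℤ_[p], (W : ℚ_[p]) = w := ⟨⟨w, hw⟩, rfl⟩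
    have e' : W ^ 2 = 2 - 2 * (p : ℤ_[p]) * Z ^ 4 := by
      apply Subtype.ext
      rw [← e1]
      exact PadicInt.coe_pow _ _
    have e2 := congrArg (PadicInt.toZMod (p := p)) e'
    simp only [map_pow, map_sub, map_mul, map_natCast, map_ofNat, CharP.cast_eq_zero,
      mul_zero, zero_mul, sub_zero] at e2
    have := (ZMod.exists_sq_eq_two_iff hp2).1 ⟨_, by rw [← e2, sq]⟩
    omega
  · have hz0 : z ≠ 0 := by rintro rfl; simp at hz
    have hv : z.valuation < 0 := by
      rw [Padic.norm_le_one_iff_val_nonneg] at hz; omega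
    have nz : ‖2 * (p : ℚ_[p]) * z ^ 4‖ = (p : ℝ) ^ (-(1 + 4 * z.valuation)) := by
      have h1 : (p : ℚ_[p]) * z ^ 4 ≠ 0 := mul_ne_zero hp0 (pow_ne_zero _ hz0)
      rw [mul_assoc, norm_mul, n2, one_mul, Padic.norm_eq_zpow_neg_valuation h1,
        Padic.valuation_mul hp0 (pow_ne_zero _ hz0), Padic.valuation_p, Padic.valuation_pow]
      norm_num
    have hgt : 1 < ‖2 * (p : ℚ_[p]) * z ^ 4‖ := by
      rw [nz]; exact one_lt_zpow₀ hp1 (by omega)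
    have hn : ‖w ^ 2‖ = ‖2 * (p : ℚ_[p]) * z ^ 4‖ := by
      apply Padic.norm_eq_of_norm_add_lt_right
      rw [e, sub_add_cancel, n2]; exact hgt
    have hw0 : w ≠ 0 := by
      rintro rfl
      rw [← hn] at hgt
      norm_num at hgt
    rw [nz, Padic.norm_eq_zpow_neg_valuation (pow_ne_zero _ hw0), Padic.valuation_pow] at hn
    have := zpow_right_injective₀ (by linarith) hp1.ne' hn
    push_cast at this
    omega
end

section
/- Let p be a prime with p ≡ 1 (mod 8), and let A, B be integers with p = A² + B² and A·B ≡ 0 (mod 4). Then 2 is a quartic residue modulo p (i.e., there exists x with x⁴ ≡ 2 (mod p)) if and only if A·B ≡ 0 (mod 8). -/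
/-- `a` is a square modulo `p = a² + b²`. -/
theorem aux_a (p a b : ℕ) (hp : p.Prime) (h4 : p % 4 = 1) (h : p = a ^ 2 + b ^ 2)
    (ha : Odd a) : jacobiSym a p = 1 := by
  have hcop : Nat.Coprime b a := by
    by_contra hc
    obtain ⟨q, hq, hqb, hqa⟩ := Nat.Prime.not_coprime_iff_dvd.mp hc
    have h2 : q * q ∣ p := by
      rw [h, sq, sq]
      exact dvd_add (mul_dvd_mul hqa hqa) (mul_dvd_mul hqb hqb)
    have := (Nat.squarefree_iff_prime_squarefree.mp hp.prime.squarefree) q hq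
    exact this h2
  rw [jacobiSym.quadratic_reciprocity_one_mod_four' ha h4]
  have : jacobiSym (p : ℤ) a = jacobiSym ((b : ℤ) ^ 2) a := by
    apply jacobiSym.mod_left'
    rw [h]; push_cast
    rw [sq (a : ℤ), add_comm, Int.add_mul_emod_self_left]
  rw [this]
  apply jacobiSym.sq_one'
  simpa [Int.gcd_natCast_natCast] using hcop

theorem aux_n (p a b : ℕ) (hp : p.Prime) (h4 : p % 4 = 1) (h : p = a ^ 2 + b ^ 2)
    (hn : Odd (a + b)) : jacobiSym ((a + b : ℕ) : ℤ) p = ZMod.χ₈ (a + b : ℕ) := by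
  have hcop : Nat.Coprime (2 * b) (a + b) := by
    by_contra hc
    obtain ⟨q, hq, hqb, hqa⟩ := Nat.Prime.not_coprime_iff_dvd.mp hc
    have hq2 : ¬ q ∣ 2 := by
      intro h2
      have := (Nat.prime_dvd_prime_iff_eq hq Nat.prime_two).mp h2
      subst this
      exact (Nat.not_even_iff_odd.mpr hn) (even_iff_two_dvd.mpr hqa)
    have hqb : q ∣ b := (hq.dvd_mul.mp hqb).resolve_left hq2
    have hqa : q ∣ a := (Nat.dvd_add_left hqb).mp hqa
    have h2 : q * q ∣ p := by
      rw [h, sq, sq]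
      exact dvd_add (mul_dvd_mul hqa hqa) (mul_dvd_mul hqb hqb)
    exact (Nat.squarefree_iff_prime_squarefree.mp hp.prime.squarefree) q hq h2
  rw [jacobiSym.quadratic_reciprocity_one_mod_four' hn h4, ← jacobiSym.at_two hn]
  have h2p : jacobiSym (2 * p : ℤ) (a + b) = jacobiSym ((2 * b : ℤ) ^ 2) (a + b) := by
    apply jacobiSym.mod_left'
    have : (2 * p : ℤ) = (2 * b : ℤ) ^ 2 + ((a + b : ℕ) : ℤ) * (2 * a - 2 * b) := by
      rw [h]; push_cast; ring
    rw [this, Int.add_mul_emod_self_left]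
  have h1 : jacobiSym ((2 * b : ℤ) ^ 2) (a + b) = 1 := by
    apply jacobiSym.sq_one'
    have : (2 * b : ℤ) = ((2 * b : ℕ) : ℤ) := by push_cast; rfl
    rw [this, Int.gcd_natCast_natCast]
    exact hcop
  rw [h1, jacobiSym.mul_left] at h2p
  rcases jacobiSym.trichotomy 2 (a + b) with e | e | e <;> rw [e] at h2p ⊢ <;> linarith

theorem aux_main (p a b : ℕ) (hp : p.Prime) (h8 : p % 8 = 1) (h : p = a ^ 2 + b ^ 2)
    (ha : Odd a) (hb : 4 ∣ b) : (∃ y : ZMod p, y ^ 4 = 2) ↔ 8 ∣ b := by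
  have : Fact p.Prime := ⟨hp⟩
  have hn : Odd (a + b) := ha.add_even (even_iff_two_dvd.mpr (dvd_trans (by norm_num) hb))
  have hp2 : p ≠ 2 := by rintro rfl; omega
  have hA := aux_a p a b hp (by omega) h ha
  have hN := aux_n p a b hp (by omega) h hn
  rw [← jacobiSym.legendreSym.to_jacobiSym] at hA hN
  simp only [legendreSym] at hA hN
  push_cast at hA hN
  have ha0 : (a : ZMod p) ≠ 0 := by
    intro h0; rw [h0] at hA; simp at hA
  have hchar : ringChar (ZMod p) ≠ 2 := by rwa [ZMod.ringChar_zmod_n]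
  have hneg : quadraticChar (ZMod p) (-1) = 1 := by
    rw [quadraticChar_neg_one hchar, ZMod.card, ZMod.χ₄_nat_one_mod_four (by omega)]
  obtain ⟨s, hs⟩ : ∃ s : ZMod p, 2 = s * s :=
    (ZMod.exists_sq_eq_two_iff hp2).mpr (Or.inl h8)
  have h20 : (2 : ZMod p) ≠ 0 := Ring.two_ne_zero hchar
  have hs0 : s ≠ 0 := by rintro rfl; apply h20; simpa using hs
  have hsum : (a : ZMod p) ^ 2 + (b : ZMod p) ^ 2 = 0 := by
    have : ((a ^ 2 + b ^ 2 : ℕ) : ZMod p) = 0 :=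
      (ZMod.natCast_eq_zero_iff _ _).mpr (dvd_of_eq h)
    exact_mod_cast this
  obtain ⟨k, hk⟩ : ∃ k, p = 8 * k + 1 := ⟨p / 8, by omega⟩
  obtain ⟨i, hi⟩ : ∃ i : ZMod p, i = b / a := ⟨_, rfl⟩
  have hbi : (b : ZMod p) = a * i := by rw [hi]; field_simp
  have hi2 : i ^ 2 = -1 := by
    have : (a : ZMod p) ^ 2 * (i ^ 2 + 1) = 0 := by rw [← hsum, hbi]; ring
    have := (mul_eq_zero.mp this).resolve_left (pow_ne_zero 2 ha0)
    exact eq_neg_of_add_eq_zero_left this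
  have hi0 : i ≠ 0 := by rintro rfl; simp at hi2
  obtain ⟨t, ht⟩ : ∃ t : ZMod p, i = t * t := by
    apply (ZMod.euler_criterion p hi0).mpr
    rw [show p / 2 = 2 * (2 * k) by omega, pow_mul, hi2, pow_mul]; simp
  have ht4 : t ^ 4 = -1 := by rw [← hi2, ht]; ring
  have ht0 : t ≠ 0 := by rintro rfl; simp at ht4
  have hk2 : quadraticChar (ZMod p) t = (-1) ^ k := by
    have h1 := quadraticChar_eq_pow_of_char_ne_two' hchar t
    rw [ZMod.card, show p / 2 = 4 * k by omega, pow_mul, ht4] at h1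
    have hne : (1 : ZMod p) ≠ -1 := by
      intro h; apply h20; linear_combination h
    rcases quadraticChar_dichotomy ht0 with e | e <;> rcases Nat.even_or_odd k with e2 | e2 <;>
      rw [e] at h1 ⊢ <;> rw [e2.neg_one_pow] at h1 ⊢ <;> push_cast at h1
    · exact absurd h1 hne
    · exact absurd h1.symm hne
  have hsq : ((a : ZMod p) + b) ^ 2 = (s * a * t) ^ 2 := by
    have : (s * a * t) ^ 2 = (s * s) * a * (a * (t * t)) := by ring
    rw [this, ← hs, ← ht, ← hbi]
    linear_combination hsum
  have hchi : quadraticChar (ZMod p) ((a : ZMod p) + b) = quadraticChar (ZMod p) s * (-1) ^ k := by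
    rcases sq_eq_sq_iff_eq_or_eq_neg.mp hsq with e | e
    · rw [e, map_mul, map_mul, hA, hk2, mul_one]
    · rw [e, ← neg_one_mul, map_mul, map_mul, map_mul, hA, hk2, hneg]; ring
  have hiff : (∃ y : ZMod p, y ^ 4 = 2) ↔ quadraticChar (ZMod p) s = 1 := by
    rw [quadraticChar_one_iff_isSquare hs0]
    constructor
    · rintro ⟨y, hy⟩
      have : (y ^ 2) ^ 2 = s ^ 2 := by rw [sq s, ← hs, ← hy]; ring
      rcases sq_eq_sq_iff_eq_or_eq_neg.mp this with e | e
      · exact ⟨y, by rw [← e]; ring⟩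
      · exact ⟨i * y, by linear_combination e - y ^ 2 * hi2⟩
    · rintro ⟨y, hy⟩
      exact ⟨y, by rw [hs, hy]; ring⟩
  rw [hiff]
  rw [hchi] at hN
  obtain ⟨c, rfl⟩ := hb
  obtain ⟨d, hd⟩ := ha
  have hk' : (k + c) % 2 = 0 ↔ ((a + 4 * c) % 8 = 1 ∨ (a + 4 * c) % 8 = 7) := by
    have e1 : 8 * k = 4 * (d * (d + 1)) + 16 * (c * c) := by
      have : 8 * k + 1 = (2 * d + 1) ^ 2 + (4 * c) ^ 2 := by rw [← hk, h, hd]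
      nlinarith
    have e2 : d % 4 = 0 ∨ d % 4 = 1 ∨ d % 4 = 2 ∨ d % 4 = 3 := by omega
    obtain ⟨m, hm⟩ : ∃ m, d = 4 * m + d % 4 := ⟨d / 4, by omega⟩
    rcases e2 with e | e | e | e <;> rw [e] at hm <;> subst hm <;> ring_nf at e1 <;> omega
  have h8c : (8 ∣ 4 * c) ↔ c % 2 = 0 := by omega
  rw [h8c]
  have hχ := ZMod.χ₈_nat_eq_if_mod_eight (a + 4 * c)
  push_cast at hχ hN
  rw [hχ] at hN
  have hodd : (a + 4 * c) % 2 ≠ 0 := by omega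
  rw [if_neg hodd] at hN
  rcases Nat.even_or_odd k with e | e
  · have := Nat.even_iff.mp e
    rw [e.neg_one_pow, mul_one] at hN
    rw [hN]; split_ifs with h'
    · have := hk'.mpr h'; simp; omega
    · have := mt hk'.mp h'; simp; omega
  · have := Nat.odd_iff.mp e
    rw [e.neg_one_pow] at hN
    have hN' : quadraticChar (ZMod p) s =
      -(if (a + 4 * c) % 8 = 1 ∨ (a + 4 * c) % 8 = 7 then 1 else -1) := by rw [← hN]; ring
    rw [hN']; split_ifs with h'
    · have := hk'.mpr h'; norm_num; omega
    · have := mt hk'.mp h'; simp; omega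

/-- Quartic reciprocity for 2. Let `p ≡ 1 (mod 8)` be prime and `A`, `B` integers
with `p = A² + B²` and `4 ∣ A·B`. Then `2` is a quartic residue modulo `p` if and only if
`8 ∣ A·B`. -/
theorem stmt11 (p : ℕ) (hp : p.Prime) (h1 : p % 8 = 1)
    (A B : ℤ) (hAB : (p : ℤ) = A ^ 2 + B ^ 2) (h4 : (4 : ℤ) ∣ A * B) :
    (∃ x : ℤ, x ^ 4 ≡ 2 [ZMOD (p : ℤ)]) ↔ (8 : ℤ) ∣ A * B := by
  have hx : (∃ x : ℤ, x ^ 4 ≡ 2 [ZMOD (p : ℤ)]) ↔ ∃ y : ZMod p, y ^ 4 = 2 := by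
    constructor
    · rintro ⟨x, hx⟩
      have := (ZMod.intCast_eq_intCast_iff _ _ _).mpr hx
      exact ⟨x, by exact_mod_cast this⟩
    · rintro ⟨y, hy⟩
      obtain ⟨x, rfl⟩ := ZMod.intCast_surjective y
      exact ⟨x, (ZMod.intCast_eq_intCast_iff _ _ _).mp (by exact_mod_cast hy)⟩
  rw [hx]
  have hn : p = A.natAbs ^ 2 + B.natAbs ^ 2 := by
    zify; simpa using hAB
  have h4' : 4 ∣ A.natAbs * B.natAbs := by
    rw [← Int.natAbs_mul]; exact Int.natCast_dvd.mp (by exact_mod_cast h4)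
  have h8' : (8 : ℤ) ∣ A * B ↔ 8 ∣ A.natAbs * B.natAbs := by
    rw [← Int.natAbs_mul]; exact Int.natCast_dvd (m := 8)
  rw [h8']
  generalize A.natAbs = a at *
  generalize B.natAbs = b at *
  have cop : ∀ {x : ℕ}, Odd x → ∀ j, Nat.Coprime (2 ^ j) x := fun hx j =>
    Nat.Coprime.pow_left j (Nat.coprime_two_left.mpr hx)
  rcases Nat.even_or_odd a with ea | oa
  · have ob : Odd b := by
      by_contra hc
      have eb := Nat.not_odd_iff_even.mp hc
      have : Even p := by rw [hn]; exact (ea.pow_of_ne_zero two_ne_zero).add (eb.pow_of_ne_zero two_ne_zero)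
      have := Nat.even_iff.mp this
      omega
    have h4a : 4 ∣ a := Nat.Coprime.dvd_of_dvd_mul_right (cop ob 2) h4'
    rw [aux_main p b a hp h1 (by rw [hn]; ring) ob h4a]
    exact ⟨fun h => h.mul_right b, fun h => Nat.Coprime.dvd_of_dvd_mul_right (cop ob 3) h⟩
  · have h4b : 4 ∣ b := Nat.Coprime.dvd_of_dvd_mul_left (cop oa 2) h4'
    rw [aux_main p a b hp h1 hn oa h4b]
    exact ⟨fun h => h.mul_left a, fun h => Nat.Coprime.dvd_of_dvd_mul_left (cop oa 3) h⟩
end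

section
/- Let p be a prime with p ≡ 1 (mod 8) and assume that 2 is not a quartic residue modulo p (i.e., there is no x with x⁴ ≡ 2 (mod p)). Then none of the three equations w² = −1 + 4·p·z⁴, w² = −2 + 2·p·z⁴, and w² = 2 − 2·p·z⁴ has a solution with z, w ∈ ℚ. -/
open NumberTheorySymbols in
lemma aux_jac (m Z S : ℤ) (n : ℕ) (h : (n : ℤ) ∣ m * Z ^ 4 - S ^ 2) (hc : IsCoprime S (n : ℤ)) :
    J(m | n) = 1 := by
  have h1 : J(m * Z ^ 4 | n) = J(S ^ 2 | n) :=
    jacobiSym.mod_left' (Int.emod_eq_emod_iff_emod_sub_eq_zero.mpr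
      (Int.emod_eq_zero_of_dvd h))
  rw [jacobiSym.sq_one' (Int.isCoprime_iff_gcd_eq_one.mp hc), jacobiSym.mul_left,
    jacobiSym.pow_left] at h1
  rcases jacobiSym.trichotomy Z n with h2 | h2 | h2 <;> rw [h2] at h1 <;> simpa using h1

open NumberTheorySymbols in
lemma aux_abs (p : ℕ) (h1 : p % 8 = 1) (a : ℤ) : J((a.natAbs : ℤ) | p) = J(a | p) := by
  rcases Int.natAbs_eq a with h | h
  · rw [← h]
  · have : J(a | p) = J(-(a.natAbs : ℤ) | p) := by rw [← h]
    rw [this, jacobiSym.neg _ (Nat.odd_iff.mpr (by omega)), ZMod.χ₄_nat_one_mod_four (by omega),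
      one_mul]

open NumberTheorySymbols in
lemma aux_two (p : ℕ) (h1 : p % 8 = 1) : J(2 | p) = 1 := by
  rw [jacobiSym.at_two (Nat.odd_iff.mpr (by omega)), ZMod.χ₈_nat_eq_if_mod_eight]
  simp [h1]; omega

open NumberTheorySymbols in
lemma aux_qr (p : ℕ) (h1 : p % 8 = 1) (V Z S : ℤ) (hV : V ≠ 0)
    (h : V ∣ p * Z ^ 4 - S ^ 2) (hc : IsCoprime S V) : J(V | p) = 1 := by
  rw [← aux_abs p h1]
  obtain ⟨k, m, hm, hk⟩ := Nat.exists_eq_two_pow_mul_odd (Int.natAbs_ne_zero.mpr hV)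
  have hmV : (m : ℤ) ∣ V := by
    rw [← Int.dvd_natAbs, hk]; push_cast; exact dvd_mul_left _ _
  rw [hk]; push_cast
  rw [jacobiSym.mul_left, jacobiSym.pow_left, aux_two p h1, one_pow, one_mul,
    ← jacobiSym.quadratic_reciprocity_one_mod_four (by omega) hm]
  exact aux_jac _ Z S m (hmV.trans h) (hc.of_isCoprime_of_dvd_right hmV)

lemma aux_int (q : ℚ) (n : ℤ) (h : q ^ 2 = n) : ∃ m : ℤ, q = m := by
  have : IsIntegral ℤ (q ^ 2) := by rw [h]; exact isIntegral_algebraMap (R := ℤ) (x := n)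
  obtain ⟨y, hy⟩ := IsIntegrallyClosed.exists_algebraMap_eq_of_isIntegral_pow
    (R := ℤ) (n := 2) (by norm_num) this
  exact ⟨y, by simpa using hy.symm⟩

lemma aux_quartic (p : ℕ) [Fact p.Prime] (x : ZMod p) (hx : x ^ 4 = 2) :
    ∃ x : ℤ, x ^ 4 ≡ 2 [ZMOD (p : ℤ)] := by
  refine ⟨x.val, ?_⟩
  rw [← ZMod.intCast_eq_intCast_iff]
  simp [hx]

lemma aux_p (p : ℕ) (hp : p.Prime) (V Z : ℤ) (S : ℤ)
    (hc : IsCoprime S Z) (hS : (p : ℤ) ∣ S) (hV : (p : ℤ) ∣ V) (c d : ℤ)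
    (h : c * V ^ 2 = d * S ^ 4 - p * Z ^ 4) : False := by
  have hpp : Prime (p : ℤ) := Nat.prime_iff_prime_int.mp hp
  obtain ⟨s, rfl⟩ := hS
  obtain ⟨v, rfl⟩ := hV
  have : (p : ℤ) ∣ Z ^ 4 := by
    refine ⟨d * p ^ 2 * s ^ 4 - c * v ^ 2, ?_⟩
    apply mul_left_cancel₀ hpp.ne_zero
    linear_combination h
  have h2 := hpp.dvd_of_dvd_pow this
  exact hpp.not_isUnit (hc.isUnit_of_dvd' (dvd_mul_right _ _) h2)

/-- Cases two and three. -/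
lemma case_two (p : ℕ) (hp : p.Prime) (h1 : p % 8 = 1) (c V T Z : ℤ) (hcc : c = 1 ∨ c = -1)
    (hc : IsCoprime T Z) (h : 2 * c * V ^ 2 = T ^ 4 - p * Z ^ 4) :
    ∃ x : ℤ, x ^ 4 ≡ 2 [ZMOD (p : ℤ)] := by
  have : Fact p.Prime := ⟨hp⟩
  have hpp : Prime (p : ℤ) := Nat.prime_iff_prime_int.mp hp
  have hc1 : c ^ 2 = 1 := by rcases hcc with rfl | rfl <;> norm_num
  have hp2 : ¬ (p : ℤ) ∣ 2 := by
    intro hd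
    have := Int.le_of_dvd (by norm_num) hd
    have := hp.two_le
    omega
  have hV : ¬ (p : ℤ) ∣ V := by
    intro hV
    have hT : (p : ℤ) ∣ T ^ 4 := by
      rw [show T ^ 4 = V * (2 * c * V) + p * Z ^ 4 by linear_combination -h]
      exact dvd_add (hV.mul_right _) (dvd_mul_right _ _)
    exact aux_p p hp V Z T hc (hpp.dvd_of_dvd_pow hT) hV (2 * c) 1 (by linear_combination h)
  have hT : ¬ (p : ℤ) ∣ T := by
    intro hT
    have : (p : ℤ) ∣ 2 * V ^ 2 := by
      rw [show 2 * V ^ 2 = T * (c * T ^ 3) - p * (c * Z ^ 4) by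
        linear_combination c * h - 2 * V ^ 2 * hc1]
      exact dvd_sub (hT.mul_right _) (dvd_mul_right _ _)
    rcases hpp.dvd_or_dvd this with h | h
    · exact hp2 h
    · exact hV (hpp.dvd_of_dvd_pow h)
  have hTp : IsCoprime T (p : ℤ) := ((Prime.coprime_iff_not_dvd hpp).mpr hT).symm
  have hTV : IsCoprime T V := by
    have h3 : IsCoprime T (p * Z ^ 4) := hTp.mul_right hc.pow_right
    rw [show (p : ℤ) * Z ^ 4 = V * (-2 * c * V) + T * T ^ 3 by linear_combination h] at h3
    exact (IsCoprime.add_mul_left_right_iff.mp h3).of_mul_right_left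
  have hV0 : V ≠ 0 := by rintro rfl; simp at hV
  have hJ := aux_qr p h1 V Z (T ^ 2) hV0 ⟨-2 * c * V, by linear_combination h⟩ hTV.pow_left
  obtain ⟨v, hv⟩ := ZMod.isSquare_of_jacobiSym_eq_one hJ
  have hVz : (V : ZMod p) ≠ 0 := by rwa [Ne, ZMod.intCast_zmod_eq_zero_iff_dvd]
  have hv0 : v ≠ 0 := by rintro rfl; simp at hv; exact hVz hv
  have he : (2 : ZMod p) * c * V ^ 2 = T ^ 4 := by
    have := congrArg (Int.cast : ℤ → ZMod p) h
    push_cast at this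
    simpa using this
  -- c is a fourth power
  have hm1 : ∃ e : ZMod p, e ^ 4 = -1 := by
    have hi : IsSquare (-1 : ZMod p) := ZMod.exists_sq_eq_neg_one_iff.mpr (by omega)
    obtain ⟨s, hs⟩ := (ZMod.exists_sq_eq_two_iff (p := p) (by omega)).mpr (Or.inl h1)
    obtain ⟨i, hi⟩ := hi
    have h20 : (2 : ZMod p) ≠ 0 := by
      have := (ZMod.intCast_zmod_eq_zero_iff_dvd 2 p).not.mpr hp2
      simpa using this
    have hs0 : s ≠ 0 := by rintro rfl; simp at hs; exact h20 hs
    refine ⟨(1 + i) / s, ?_⟩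
    rw [div_pow, div_eq_iff (by positivity)]
    linear_combination (-(s*s) - 2) * hs - (i^2 + 4 * i + 5) * hi
  have hc4 : ∃ e : ZMod p, e ^ 4 = c := by
    rcases hcc with rfl | rfl
    · exact ⟨1, by simp⟩
    · obtain ⟨e, he⟩ := hm1; exact ⟨e, by simp [he]⟩
  obtain ⟨e, hec⟩ := hc4
  have hcz : (c : ZMod p) ^ 2 = 1 := by exact_mod_cast congrArg (Int.cast : ℤ → ZMod p) hc1
  refine aux_quartic p (e * T / v) ?_
  rw [div_pow, div_eq_iff (pow_ne_zero 4 hv0), mul_pow, hec, ← he, hv]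
  linear_combination 2 * v ^ 4 * hcz

open NumberTheorySymbols in
lemma case_one (p : ℕ) (hp : p.Prime) (h1 : p % 8 = 1) (V t Z : ℤ) (hZ : Odd Z)
    (hc : IsCoprime t Z) (h : V ^ 2 + 4 * t ^ 4 = p * Z ^ 4) :
    ∃ x : ℤ, x ^ 4 ≡ 2 [ZMOD (p : ℤ)] := by
  have : Fact p.Prime := ⟨hp⟩
  have hpp : Prime (p : ℤ) := Nat.prime_iff_prime_int.mp hp
  have ht : ¬ (p : ℤ) ∣ t := by
    intro ht
    have hV : (p : ℤ) ∣ V ^ 2 := by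
      rw [show V ^ 2 = p * Z ^ 4 - t * (4 * t ^ 3) by linear_combination h]
      exact dvd_sub (dvd_mul_right _ _) (ht.mul_right _)
    exact aux_p p hp V Z t hc ht (hpp.dvd_of_dvd_pow hV) (-1) 4 (by linear_combination -h)
  have htV : IsCoprime t V := by
    have h3 : IsCoprime t (p * Z ^ 4) :=
      (((Prime.coprime_iff_not_dvd hpp).mpr ht).symm).mul_right hc.pow_right
    rw [show (p : ℤ) * Z ^ 4 = V * V + t * (4 * t ^ 3) by linear_combination -h] at h3
    exact (IsCoprime.add_mul_left_right_iff.mp h3).of_mul_right_left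
  have h20 : (2 : ZMod p) ≠ 0 := by
    have hp2 : ¬ (p : ℤ) ∣ 2 := by
      intro hd
      have := Int.le_of_dvd (by norm_num) hd
      have := hp.two_le
      omega
    have := (ZMod.intCast_zmod_eq_zero_iff_dvd 2 p).not.mpr hp2
    simpa using this
  -- parity
  obtain ⟨k, hk⟩ : ∃ k, p = 8 * k + 1 := ⟨p / 8, by omega⟩
  have hZ4 : ∃ z, Z ^ 4 = 16 * z + 1 := by
    obtain ⟨z, hz⟩ := Int.eight_dvd_sq_sub_one_of_odd hZ
    exact ⟨z * (4 * z + 1), by rw [show Z ^ 4 = (Z ^ 2) ^ 2 by ring,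
      show Z ^ 2 = 8 * z + 1 by linarith]; ring⟩
  obtain ⟨z, hz⟩ := hZ4
  have hVo : Odd V := by
    rw [← Int.not_even_iff_odd]
    rintro ⟨u, rfl⟩
    rw [hz, hk] at h
    push_cast at h
    ring_nf at h
    omega
  obtain ⟨v, hv⟩ := Int.eight_dvd_sq_sub_one_of_odd hVo
  have hte : Even t := by
    rw [← Int.not_odd_iff_even]
    intro hto
    obtain ⟨u, hu⟩ := Int.eight_dvd_sq_sub_one_of_odd hto
    rw [hz, hk, show t ^ 4 = (t ^ 2) ^ 2 by ring, show t ^ 2 = 8 * u + 1 by linarith,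
      show V ^ 2 = 8 * v + 1 by linarith] at h
    push_cast at h
    ring_nf at h
    omega
  obtain ⟨r, hr⟩ := hte
  have hao : Odd (V + 2 * t ^ 2) := hVo.add_even (even_two_mul _)
  have hno : Odd (V + 2 * t ^ 2).natAbs := Int.natAbs_odd.mpr hao
  -- Jacobi symbol
  have hcop : IsCoprime (2 * V) (V + 2 * t ^ 2) := by
    apply IsCoprime.mul_left
    · exact (Int.isCoprime_two_left).mpr hao
    · have : IsCoprime V (2 * t ^ 2) :=
        ((Int.isCoprime_two_left).mpr hVo).symm.mul_right htV.symm.pow_right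
      have h4 := this.add_mul_left_right 1
      rwa [show 2 * t ^ 2 + V * 1 = V + 2 * t ^ 2 by ring] at h4
  have hJ2p : J(2 * (p : ℤ) | (V + 2 * t ^ 2).natAbs) = 1 := by
    refine aux_jac _ Z (2 * V) _ ?_ ?_
    · rw [Int.natAbs_dvd]
      exact ⟨2 * (2 * t ^ 2 - V), by linear_combination -2 * h⟩
    · rcases Int.natAbs_eq (V + 2 * t ^ 2) with h | h
      · rw [← h]; exact hcop
      · rw [h] at hcop; exact (IsCoprime.neg_right_iff _ _).mp hcop
  have hn16 : ∃ y : ℕ, (V + 2 * t ^ 2).natAbs ^ 2 = 8 * k + 1 + 16 * y ∨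
      (V + 2 * t ^ 2).natAbs ^ 2 + 16 * y = 8 * k + 1 := by
    have : ∃ y : ℤ, (((V + 2 * t ^ 2).natAbs : ℤ)) ^ 2 = 8 * k + 1 + 16 * y := by
      rw [Int.natAbs_sq]
      have h5 : V ^ 2 = (8 * k + 1) * (16 * z + 1) - 4 * t ^ 4 := by
        rw [← hz]; rw [hk] at h; push_cast at h; linarith
      refine ⟨(8 * k + 1) * z + V * r ^ 2, ?_⟩
      subst hr
      linear_combination h5
    obtain ⟨y, hy⟩ := this
    rcases Int.natAbs_eq y with h6 | h6
    · exact ⟨y.natAbs, Or.inl (by rw [h6] at hy; exact_mod_cast hy)⟩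
    · refine ⟨y.natAbs, Or.inr ?_⟩
      zify
      rw [← Int.natCast_natAbs, ← Int.natCast_natAbs]
      rw [h6] at hy
      linarith
  have hJ2 : J(2 | (V + 2 * t ^ 2).natAbs) = (-1) ^ k := by
    rw [jacobiSym.at_two hno, ZMod.χ₈_nat_eq_if_mod_eight]
    generalize (V + 2 * t ^ 2).natAbs = n at *
    have hn : n % 2 = 1 := Nat.odd_iff.mp hno
    have h7 : n ^ 2 % 16 = (8 * k + 1) % 16 := by
      obtain ⟨y, hy | hy⟩ := hn16 <;> omega
    have h8 : n ^ 2 % 16 = (n % 8) ^ 2 % 16 := by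
      conv_lhs => rw [← Nat.div_add_mod n 8]
      ring_nf
      omega
    have h9 : n % 8 < 8 := Nat.mod_lt _ (by norm_num)
    have h10 : n % 8 % 2 = 1 := by omega
    rw [h8] at h7
    clear hJ2p hn16 hno h8
    rcases Nat.even_or_odd k with hkk | hkk
    · rw [hkk.neg_one_pow, if_neg (by omega), if_pos]
      obtain ⟨l, rfl⟩ := hkk
      generalize n % 8 = q at *
      interval_cases q <;> omega
    · rw [hkk.neg_one_pow, if_neg (by omega), if_neg]
      obtain ⟨l, rfl⟩ := hkk
      generalize n % 8 = q at *
      interval_cases q <;> omega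
  have hJ : J(V + 2 * t ^ 2 | p) = (-1) ^ k := by
    rw [← aux_abs p h1, ← jacobiSym.quadratic_reciprocity_one_mod_four (by omega) hno]
    rw [jacobiSym.mul_left, hJ2] at hJ2p
    have : ((-1 : ℤ) ^ k) * (-1) ^ k = 1 := by rw [← mul_pow]; simp
    linear_combination (-1) ^ k * hJ2p - J((p : ℤ) | (V + 2 * t ^ 2).natAbs) * this
  rw [← jacobiSym.legendreSym.to_jacobiSym] at hJ
  have hE := legendreSym.eq_pow p (V + 2 * t ^ 2)
  rw [hJ, show p / 2 = 4 * k by omega] at hE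
  push_cast at hE
  have htz : (t : ZMod p) ≠ 0 := by rwa [Ne, ZMod.intCast_zmod_eq_zero_iff_dvd]
  have he : (V : ZMod p) ^ 2 + 4 * t ^ 4 = 0 := by
    have := congrArg (Int.cast : ℤ → ZMod p) h
    push_cast at this
    simpa using this
  generalize (V : ZMod p) = V' at *
  generalize (t : ZMod p) = τ at *
  have hfer : ∀ x : ZMod p, x ≠ 0 → x ^ (8 * k) = 1 := by
    intro x hx
    have := ZMod.pow_card_sub_one_eq_one hx
    rwa [show p - 1 = 8 * k by omega] at this
  have hi2 : ((V' + 2 * τ ^ 2) ^ 2) ^ 2 = - 64 * τ ^ 8 := by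
    linear_combination (V' ^ 2 + 8 * V' * τ ^ 2 + 20 * τ ^ 4) * he
  have h64 : ((64 : ZMod p)) ^ k = 1 := by
    have : (V' + 2 * τ ^ 2) ^ (4 * k) = (-1) ^ k * 64 ^ k := by
      rw [show 4 * k = 2 * 2 * k by ring, pow_mul, pow_mul, hi2, mul_pow, ← pow_mul, hfer τ htz,
        mul_one, ← mul_pow]
      norm_num
    rw [this] at hE
    have h3 : ((-1 : ZMod p) ^ k) * (-1) ^ k = 1 := by rw [← mul_pow]; simp
    linear_combination -(-1) ^ k * hE - (64 ^ k - 1) * h3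
  obtain ⟨s, hs⟩ := (ZMod.exists_sq_eq_two_iff (p := p) (by omega)).mpr (Or.inl h1)
  have hs0 : s ≠ 0 := by rintro rfl; simp at hs; exact h20 hs
  have hs12 : s ^ (12 * k) = 1 := by
    rw [pow_mul, show s ^ 12 = (s * s) ^ 6 by ring, ← hs, ← h64]; norm_num
  have hs4 : s ^ (p / 2) = 1 := by
    rw [show p / 2 = 4 * k by omega]
    have := hfer s hs0
    rwa [show 12 * k = 8 * k + 4 * k by ring, pow_add, this, one_mul] at hs12
  obtain ⟨x, hx⟩ := (ZMod.euler_criterion p hs0).mpr hs4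
  exact aux_quartic p x (by rw [hs, hx]; ring)

/-- Let `p ≡ 1 (mod 8)` be prime such that `2` is not a quartic residue modulo `p`.
Then none of the equations `w² = −1 + 4pz⁴`, `w² = −2 + 2pz⁴`, `w² = 2 − 2pz⁴` has a rational
solution. -/
theorem stmt12 (p : ℕ) (hp : p.Prime) (h1 : p % 8 = 1)
    (hq : ¬ ∃ x : ℤ, x ^ 4 ≡ 2 [ZMOD (p : ℤ)]) :
    (¬ ∃ z w : ℚ, w ^ 2 = -1 + 4 * (p : ℚ) * z ^ 4) ∧
    (¬ ∃ z w : ℚ, w ^ 2 = -2 + 2 * (p : ℚ) * z ^ 4) ∧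
    (¬ ∃ z w : ℚ, w ^ 2 = 2 - 2 * (p : ℚ) * z ^ 4) := by
  have key : ∀ (z w : ℚ) (a b : ℤ), w ^ 2 = a + b * (p : ℚ) * z ^ 4 →
      ∃ W T Z : ℤ, IsCoprime T Z ∧ W ^ 2 = a * T ^ 4 + b * p * Z ^ 4 := by
    intro z w a b h
    have hd : (z.den : ℚ) ≠ 0 := by exact_mod_cast z.den_nz
    have hz : z * z.den = z.num := Rat.mul_den_eq_num z
    have hw : (w * (z.den : ℚ) ^ 2) ^ 2 =
        ((a * (z.den : ℤ) ^ 4 + b * p * z.num ^ 4 : ℤ) : ℚ) := by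
      push_cast
      rw [← hz]
      linear_combination (z.den : ℚ) ^ 4 * h
    obtain ⟨W, hW⟩ := aux_int _ _ hw
    refine ⟨W, z.den, z.num, ?_, ?_⟩
    · rw [Int.isCoprime_iff_gcd_eq_one, Int.gcd_comm]
      exact z.reduced
    · rw [hW] at hw; exact_mod_cast hw
  refine ⟨?_, ?_, ?_⟩
  · rintro ⟨z, w, h⟩
    obtain ⟨W, T, Z, hc, h⟩ := key z w (-1) 4 (by push_cast; exact h)
    have hT : Even T := by
      rw [← Int.not_odd_iff_even]
      intro hT
      obtain ⟨u, hu⟩ := Int.eight_dvd_sq_sub_one_of_odd hT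
      rw [show T ^ 4 = (T ^ 2) ^ 2 by ring, show T ^ 2 = 8 * u + 1 by linarith] at h
      rcases Int.even_or_odd' W with ⟨x, rfl | rfl⟩ <;> ring_nf at h <;> omega
    have hZ : Odd Z := by
      rw [← Int.not_even_iff_odd]
      intro hZ
      have := hc.isUnit_of_dvd' hT.two_dvd hZ.two_dvd
      revert this; decide
    obtain ⟨t, rfl⟩ := hT.two_dvd
    have hW : (2 : ℤ) ∣ W := by
      apply Int.prime_two.dvd_of_dvd_pow (n := 2)
      exact ⟨-8 * t ^ 4 + 2 * p * Z ^ 4, by linear_combination h⟩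
    obtain ⟨V, rfl⟩ := hW
    exact hq (case_one p hp h1 V t Z hZ hc.of_mul_left_right (by
      apply mul_left_cancel₀ (show (4 : ℤ) ≠ 0 by norm_num)
      linear_combination h - 0 * h))
  · rintro ⟨z, w, h⟩
    obtain ⟨W, T, Z, hc, h⟩ := key z w (-2) 2 (by push_cast; exact h)
    have hW : (2 : ℤ) ∣ W := by
      apply Int.prime_two.dvd_of_dvd_pow (n := 2)
      exact ⟨- T ^ 4 + p * Z ^ 4, by linear_combination h⟩
    obtain ⟨V, rfl⟩ := hW
    exact hq (case_two p hp h1 (-1) V T Z (by simp) hc (by linarith))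
  · rintro ⟨z, w, h⟩
    obtain ⟨W, T, Z, hc, h⟩ := key z w 2 (-2) (by push_cast; linarith)
    have hW : (2 : ℤ) ∣ W := by
      apply Int.prime_two.dvd_of_dvd_pow (n := 2)
      exact ⟨T ^ 4 - p * Z ^ 4, by linear_combination h⟩
    obtain ⟨V, rfl⟩ := hW
    exact hq (case_two p hp h1 1 V T Z (by simp) hc (by linarith))
end

section
/- Let p be a prime with p ≡ 1 (mod 8). Let r, t be coprime integers, let s be an integer with s² = p·r⁴ − 4·t⁴, and let A, B be integers with A ≡ 1 (mod 4), B ≡ 0 (mod 4), and p = A² + B². Then g := gcd(p·r² + 2·B·t² + A·s, p·r² + 2·B·t² − A·s) is a perfect square or twice a perfect square; that is, there exists an integer m with g = m² or g = 2·m². -/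
theorem stmt13_aux_AB (p : ℕ) (hp : p.Prime) (A B : ℤ) (hpAB : (p : ℤ) = A ^ 2 + B ^ 2)
    (q : ℤ) (hq : Prime q) (hqA : q ∣ A) (hqB : q ∣ B) : False := by
  obtain ⟨a, rfl⟩ := hqA
  obtain ⟨b, rfl⟩ := hqB
  have hp' : Prime (p : ℤ) := Nat.prime_iff_prime_int.mp hp
  have h : (p : ℤ) = q * (q * (a ^ 2 + b ^ 2)) := by rw [hpAB]; ring
  rcases hp'.irreducible.isUnit_or_isUnit h with h | h
  · exact hq.not_unit h
  · exact hq.not_unit (isUnit_of_mul_isUnit_left h)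

/-- primes dividing both numbers are different from `p`, and if odd divide `A` and `N`. -/
theorem stmt13_aux_q (p : ℕ) (hp : p.Prime) (h1 : p % 8 = 1)
    (r t : ℤ) (hrt : IsCoprime r t) (s : ℤ) (hs : s ^ 2 = (p : ℤ) * r ^ 4 - 4 * t ^ 4)
    (A B : ℤ) (hpAB : (p : ℤ) = A ^ 2 + B ^ 2)
    (q : ℤ) (hq : Prime q) (hq2 : ¬ q ∣ 2)
    (hX : q ∣ (p : ℤ) * r ^ 2 + 2 * B * t ^ 2 + A * s)
    (hY : q ∣ (p : ℤ) * r ^ 2 + 2 * B * t ^ 2 - A * s) :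
    q ∣ A ∧ q ∣ B * r ^ 2 + 2 * t ^ 2 := by
  have hp' : Prime (p : ℤ) := Nat.prime_iff_prime_int.mp hp
  have hS : q ∣ (p : ℤ) * r ^ 2 + 2 * B * t ^ 2 := by
    have h := dvd_add hX hY
    have e : (p : ℤ) * r ^ 2 + 2 * B * t ^ 2 + A * s + ((p : ℤ) * r ^ 2 + 2 * B * t ^ 2 - A * s)
      = 2 * ((p : ℤ) * r ^ 2 + 2 * B * t ^ 2) := by ring
    rw [e] at h
    exact (hq.dvd_or_dvd h).resolve_left hq2
  have hrt' : q ∣ r → q ∣ t → False := fun h h' => hq.not_unit (hrt.isUnit_of_dvd' h h')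
  have hqp : ¬ q ∣ (p : ℤ) := by
    intro hqp
    have h2 : q ∣ 2 * (B * t ^ 2) := by
      have := dvd_sub hS (hqp.mul_right (r ^ 2))
      rwa [show (p : ℤ) * r ^ 2 + 2 * B * t ^ 2 - p * r ^ 2 = 2 * (B * t ^ 2) by ring] at this
    rcases hq.dvd_or_dvd ((hq.dvd_or_dvd h2).resolve_left hq2) with hB | ht
    · refine stmt13_aux_AB p hp A B hpAB q hq ?_ hB
      apply hq.dvd_of_dvd_pow (n := 2)
      have : A ^ 2 = p - B * B := by rw [hpAB]; ring
      rw [this]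
      exact dvd_sub hqp (hB.mul_right B)
    · have ht := hq.dvd_of_dvd_pow ht
      have hsq : q ∣ s := by
        apply hq.dvd_of_dvd_pow (n := 2)
        rw [hs]
        exact dvd_sub (hqp.mul_right _) ((dvd_pow ht (by norm_num)).mul_left _)
      have hpq : (p : ℤ) ∣ q := (hq.associated_of_dvd hp' hqp).symm.dvd
      obtain ⟨t', rfl⟩ := hpq.trans ht
      obtain ⟨s', rfl⟩ := hpq.trans hsq
      have hr : (p : ℤ) ∣ r ^ 4 := by
        refine ⟨s' ^ 2 + 4 * p ^ 2 * t' ^ 4, ?_⟩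
        apply mul_left_cancel₀ hp'.ne_zero
        linear_combination -hs
      exact hrt' (hqp.trans (hp'.dvd_of_dvd_pow hr)) ht
  have hN : q ∣ B * r ^ 2 + 2 * t ^ 2 := by
    have h : q ∣ p * (B * r ^ 2 + 2 * t ^ 2) ^ 2 := by
      have := hX.mul_right ((p : ℤ) * r ^ 2 + 2 * B * t ^ 2 - A * s)
      have e : ((p : ℤ) * r ^ 2 + 2 * B * t ^ 2 + A * s) *
          ((p : ℤ) * r ^ 2 + 2 * B * t ^ 2 - A * s) = p * (B * r ^ 2 + 2 * t ^ 2) ^ 2 := by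
        rw [hpAB] at hs ⊢
        linear_combination (-A ^ 2) * hs
      rwa [e] at this
    exact hq.dvd_of_dvd_pow ((hq.dvd_or_dvd h).resolve_left hqp)
  refine ⟨?_, hN⟩
  have h : q ∣ A ^ 2 * r ^ 2 := by
    have := dvd_sub hS (hN.mul_left B)
    have e : (p : ℤ) * r ^ 2 + 2 * B * t ^ 2 - B * (B * r ^ 2 + 2 * t ^ 2) = A ^ 2 * r ^ 2 := by
      rw [hpAB]; ring
    rwa [e] at this
  rcases hq.dvd_or_dvd h with h | h
  · exact hq.dvd_of_dvd_pow h
  · have hr := hq.dvd_of_dvd_pow h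
    have : q ∣ 2 * t ^ 2 := by
      have := dvd_sub hN (h.mul_left B)
      rwa [add_sub_cancel_left] at this
    exact (hrt' hr (hq.dvd_of_dvd_pow ((hq.dvd_or_dvd this).resolve_left hq2))).elim


/-- Let `p ≡ 1 (mod 8)` be prime, `r`, `t` coprime integers, `s` an integer with
`s² = p·r⁴ − 4·t⁴`, and `A`, `B` integers with `A ≡ 1 (mod 4)`, `B ≡ 0 (mod 4)` and
`p = A² + B²`. Then `gcd(p·r² + 2·B·t² + A·s, p·r² + 2·B·t² − A·s)` is a perfect square or
twice a perfect square. -/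
theorem stmt13 (p : ℕ) (hp : p.Prime) (h1 : p % 8 = 1)
    (r t : ℤ) (hrt : IsCoprime r t) (s : ℤ) (hs : s ^ 2 = (p : ℤ) * r ^ 4 - 4 * t ^ 4)
    (A B : ℤ) (hA : A ≡ 1 [ZMOD 4]) (hB : B ≡ 0 [ZMOD 4]) (hpAB : (p : ℤ) = A ^ 2 + B ^ 2) :
    ∃ m : ℤ,
      (Int.gcd ((p : ℤ) * r ^ 2 + 2 * B * t ^ 2 + A * s)
          ((p : ℤ) * r ^ 2 + 2 * B * t ^ 2 - A * s) : ℤ) = m ^ 2 ∨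
      (Int.gcd ((p : ℤ) * r ^ 2 + 2 * B * t ^ 2 + A * s)
          ((p : ℤ) * r ^ 2 + 2 * B * t ^ 2 - A * s) : ℤ) = 2 * m ^ 2 := by
  have hq2' : ∀ q : ℤ, Prime q → q ∣ A → ¬ q ∣ 2 := by
    intro q hq hqA h2
    have hq2 : (2 : ℤ) ∣ q := (hq.associated_of_dvd Int.prime_two h2).symm.dvd
    have h2A := hq2.trans hqA
    have := hA.dvd
    omega
  -- the gcd of `A`, `s`, `N`
  obtain ⟨d, hd⟩ : ∃ d : ℕ, d = Int.gcd A (Int.gcd s (B * r ^ 2 + 2 * t ^ 2)) := ⟨_, rfl⟩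
  have hA0 : A ≠ 0 := by
    rintro rfl
    have := hA.dvd
    omega
  have hd0 : (d : ℤ) ≠ 0 := by
    rw [hd]
    exact_mod_cast (Int.gcd_pos_of_ne_zero_left _ hA0).ne'
  have hdA : (d : ℤ) ∣ A := by rw [hd]; exact Int.gcd_dvd_left ..
  have hds' : (d : ℤ) ∣ Int.gcd s (B * r ^ 2 + 2 * t ^ 2) := by
    rw [hd]; exact Int.gcd_dvd_right ..
  have hds : (d : ℤ) ∣ s := hds'.trans (Int.gcd_dvd_left ..)
  have hdN : (d : ℤ) ∣ B * r ^ 2 + 2 * t ^ 2 := hds'.trans (Int.gcd_dvd_right ..)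
  have hmax : ∀ e : ℤ, e ∣ A → e ∣ s → e ∣ B * r ^ 2 + 2 * t ^ 2 → e ∣ d := by
    intro e h1 h2 h3
    rw [hd]
    exact Int.dvd_coe_gcd h1 (Int.dvd_coe_gcd h2 h3)
  have hrt' : ∀ q : ℤ, Prime q → q ∣ r → q ∣ t → False :=
    fun q hq h h' => hq.not_unit (hrt.isUnit_of_dvd' h h')
  have hcop : IsCoprime ((d : ℤ) ^ 2) (B * r ^ 2 - 2 * t ^ 2) := by
    apply IsCoprime.pow_left
    apply isCoprime_of_prime_dvd
    · exact fun h => hd0 h.1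
    · intro q hq hqd hqu
      have hqA := hqd.trans hdA
      have hqN := hqd.trans hdN
      have hq2 := hq2' q hq hqA
      have h : q ∣ 2 * (B * r ^ 2) := by
        have := dvd_add hqN hqu
        rwa [show B * r ^ 2 + 2 * t ^ 2 + (B * r ^ 2 - 2 * t ^ 2) = 2 * (B * r ^ 2) by ring] at this
      rcases hq.dvd_or_dvd ((hq.dvd_or_dvd h).resolve_left hq2) with h | h
      · exact stmt13_aux_AB p hp A B hpAB q hq hqA h
      · have h2 : q ∣ 2 * t ^ 2 := by
          have := dvd_sub hqN (h.mul_left B)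
          rwa [add_sub_cancel_left] at this
        exact hrt' q hq (hq.dvd_of_dvd_pow h)
          (hq.dvd_of_dvd_pow ((hq.dvd_or_dvd h2).resolve_left hq2))
  obtain ⟨a, ha⟩ := hdA
  obtain ⟨σ, hσ⟩ := hds
  have hd2N : (d : ℤ) ^ 2 ∣ B * r ^ 2 + 2 * t ^ 2 := by
    apply hcop.dvd_of_dvd_mul_left
    refine ⟨σ ^ 2 - a ^ 2 * r ^ 4, ?_⟩
    rw [hpAB] at hs
    rw [ha, hσ] at hs
    linear_combination -hs
  obtain ⟨ν, hν⟩ := hd2N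
  have hd20 : (d : ℤ) ^ 2 ≠ 0 := pow_ne_zero 2 hd0
  have hrel : σ ^ 2 = a ^ 2 * r ^ 4 + (B * r ^ 2 - 2 * t ^ 2) * ν := by
    apply mul_left_cancel₀ hd20
    rw [hpAB, ha, hσ] at hs
    linear_combination hs + (B * r ^ 2 - 2 * t ^ 2) * hν
  have hXe : (p : ℤ) * r ^ 2 + 2 * B * t ^ 2 + A * s
      = (d : ℤ) ^ 2 * (a ^ 2 * r ^ 2 + B * ν + a * σ) := by
    rw [hpAB, hσ]
    linear_combination B * hν + (A * r ^ 2 + d * a * r ^ 2 + d * σ) * ha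
  have hYe : (p : ℤ) * r ^ 2 + 2 * B * t ^ 2 - A * s
      = (d : ℤ) ^ 2 * (a ^ 2 * r ^ 2 + B * ν - a * σ) := by
    rw [hpAB, hσ]
    linear_combination B * hν + (A * r ^ 2 + d * a * r ^ 2 - d * σ) * ha
  have hAux := stmt13_aux_q p hp h1 r t hrt s hs A B hpAB
  rw [hXe, hYe] at hAux ⊢
  rw [Int.gcd_mul_left]
  have hx : ∀ q : ℕ, q.Prime → q ∣ Int.gcd (a ^ 2 * r ^ 2 + B * ν + a * σ)
      (a ^ 2 * r ^ 2 + B * ν - a * σ) → q = 2 := by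
    intro q hqn hqg
    by_contra hne
    have hq : Prime (q : ℤ) := Nat.prime_iff_prime_int.mp hqn
    have hq2 : ¬ (q : ℤ) ∣ 2 := by
      intro h
      exact hne ((Nat.prime_dvd_prime_iff_eq hqn Nat.prime_two).mp (by exact_mod_cast h))
    have hqg' : (q : ℤ) ∣ Int.gcd (a ^ 2 * r ^ 2 + B * ν + a * σ)
      (a ^ 2 * r ^ 2 + B * ν - a * σ) := by exact_mod_cast hqg
    have hqx := hqg'.trans (Int.gcd_dvd_left ..)
    have hqy := hqg'.trans (Int.gcd_dvd_right ..)
    obtain ⟨hqA, hqN⟩ := hAux q hq hq2 (hqx.mul_left _) (hqy.mul_left _)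
    have hqB : ¬ (q : ℤ) ∣ B := fun h => stmt13_aux_AB p hp A B hpAB q hq hqA h
    have hqt : ¬ (q : ℤ) ∣ t := by
      intro h
      have h2 : (q : ℤ) ∣ B * r ^ 2 := by
        have := dvd_sub hqN ((dvd_pow h (two_ne_zero)).mul_left 2)
        rwa [add_sub_cancel_right] at this
      exact hrt' q hq (hq.dvd_of_dvd_pow ((hq.dvd_or_dvd h2).resolve_left hqB)) h
    have hsum : (q : ℤ) ∣ a ^ 2 * r ^ 2 + B * ν := by
      have := dvd_add hqx hqy
      rw [show a ^ 2 * r ^ 2 + B * ν + a * σ + (a ^ 2 * r ^ 2 + B * ν - a * σ)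
        = 2 * (a ^ 2 * r ^ 2 + B * ν) by ring] at this
      exact (hq.dvd_or_dvd this).resolve_left hq2
    have hprod : (q : ℤ) ∣ a * σ := by
      have := dvd_sub hqx hsum
      rwa [add_sub_cancel_left] at this
    have hqr : ¬ (q : ℤ) ∣ r := by
      intro h
      have h2 : (q : ℤ) ∣ 2 * t ^ 2 := by
        have := dvd_sub hqN ((dvd_pow h (two_ne_zero)).mul_left B)
        rwa [add_sub_cancel_left] at this
      exact hqt (hq.dvd_of_dvd_pow ((hq.dvd_or_dvd h2).resolve_left hq2))
    have hfin : (q : ℤ) ∣ a ∧ (q : ℤ) ∣ σ := by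
      rcases hq.dvd_or_dvd hprod with h | h
      · refine ⟨h, ?_⟩
        have ha2 : (q : ℤ) ∣ a ^ 2 := dvd_pow h two_ne_zero
        have h3 : (q : ℤ) ∣ B * ν := by
          have := dvd_sub hsum (ha2.mul_right (r ^ 2))
          rwa [add_sub_cancel_left] at this
        have h4 := (hq.dvd_or_dvd h3).resolve_left hqB
        apply hq.dvd_of_dvd_pow (n := 2)
        rw [hrel]
        exact dvd_add (ha2.mul_right _) (h4.mul_left _)
      · refine ⟨?_, h⟩
        have hs2 : (q : ℤ) ∣ σ ^ 2 := dvd_pow h two_ne_zero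
        have h3 : (q : ℤ) ∣ 2 * (t ^ 2 * ν) := by
          have := dvd_sub (hsum.mul_right (r ^ 2)) hs2
          rwa [show (a ^ 2 * r ^ 2 + B * ν) * r ^ 2 - σ ^ 2 = 2 * (t ^ 2 * ν) by
            rw [hrel]; ring] at this
        have h4 : (q : ℤ) ∣ ν := by
          rcases hq.dvd_or_dvd ((hq.dvd_or_dvd h3).resolve_left hq2) with h | h
          · exact (hqt (hq.dvd_of_dvd_pow h)).elim
          · exact h
        have h5 : (q : ℤ) ∣ a ^ 2 * r ^ 2 := by
          have := dvd_sub hsum (h4.mul_left B)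
          rwa [add_sub_cancel_right] at this
        rcases hq.dvd_or_dvd h5 with h | h
        · exact hq.dvd_of_dvd_pow h
        · exact (hqr (hq.dvd_of_dvd_pow h)).elim
    have hqν : (q : ℤ) ∣ ν := by
      have h3 : (q : ℤ) ∣ B * ν := by
        have := dvd_sub hsum ((dvd_pow hfin.1 two_ne_zero).mul_right (r ^ 2))
        rwa [add_sub_cancel_left] at this
      exact (hq.dvd_or_dvd h3).resolve_left hqB
    have hbad : (d : ℤ) * q ∣ d := by
      apply hmax
      · rw [ha]; exact mul_dvd_mul_left _ hfin.1
      · rw [hσ]; exact mul_dvd_mul_left _ hfin.2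
      · rw [hν, pow_two]; exact mul_dvd_mul (dvd_mul_right _ _) hqν
    have : (d : ℤ) * q ∣ d * 1 := by rwa [mul_one]
    exact hq.not_unit (isUnit_of_dvd_one ((mul_dvd_mul_iff_left hd0).mp this))
  generalize Int.gcd (a ^ 2 * r ^ 2 + B * ν + a * σ) (a ^ 2 * r ^ 2 + B * ν - a * σ) = h at hx ⊢
  have hn : (((d : ℤ) ^ 2).natAbs : ℤ) = (d : ℤ) ^ 2 := by simp
  rw [Nat.cast_mul, hn]
  by_cases h0 : h = 0
  · exact ⟨0, Or.inl (by simp [h0])⟩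
  have hpow := Nat.eq_prime_pow_of_unique_prime_dvd h0 (fun {q} hq hd => hx q hq hd)
  rw [hpow]
  rcases Nat.even_or_odd' h.primeFactorsList.length with ⟨k, hk | hk⟩
  · refine ⟨d * 2 ^ k, Or.inl ?_⟩
    rw [hk]; push_cast; ring
  · refine ⟨d * 2 ^ k, Or.inr ?_⟩
    rw [hk]; push_cast; ring
end

section
/- Let p be a prime with p ≡ 1 (mod 8) such that 2 is not a quartic residue modulo p (i.e., there is no x with x⁴ ≡ 2 (mod p)). Then the equation w² = 4·p·z⁴ − 1 has solutions with z, w ∈ ℝ, has solutions with z, w ∈ ℚ₂, and has solutions with z, w ∈ ℚ_p, but has no solutions with z, w ∈ ℚ. In particular, the Hasse principle fails for the curve w² = 4pz⁴ − 1. -/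
open NumberTheorySymbols

lemma aux_hensel (q : ℕ) [Fact q.Prime] (d a : ℤ)
    (h : ‖((a ^ 2 - d : ℤ) : ℤ_[q])‖ < ‖((2 * a : ℤ) : ℤ_[q])‖ ^ 2) :
    ∃ w : ℚ_[q], w ^ 2 = (d : ℚ_[q]) := by
  have := hensels_lemma (p := q) (R := ℤ_[q]) (F := Polynomial.X ^ 2 - Polynomial.C (d : ℤ_[q]))
    (a := (a : ℤ_[q])) (by
      simp only [Polynomial.derivative_sub, Polynomial.derivative_X_pow, Polynomial.derivative_C]
      simpa using h)
  obtain ⟨z, hz, -⟩ := this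
  refine ⟨(z : ℚ_[q]), ?_⟩
  have h2 : z ^ 2 = (d : ℤ_[q]) := by
    have : z ^ 2 - (d : ℤ_[q]) = 0 := by simpa using hz
    exact sub_eq_zero.mp this
  have := congrArg (fun x : ℤ_[q] => (x : ℚ_[q])) h2
  simpa using this

lemma aux_two_s15 (p : ℕ) (h1 : p % 8 = 1) :
    ∃ z w : ℚ_[2], w ^ 2 = 4 * (p : ℚ_[2]) * z ^ 4 - 1 := by
  obtain ⟨w, hw⟩ := aux_hensel 2 ((p : ℤ) - 64) 1 (by
    have h2 : ‖((2 * 1 : ℤ) : ℤ_[2])‖ = 1 / 2 := by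
      have := PadicInt.norm_p (p := 2)
      simpa using this
    rw [h2]
    have h3 : ‖((1 ^ 2 - ((p : ℤ) - 64) : ℤ) : ℤ_[2])‖ ≤ ((2 : ℕ) : ℝ) ^ (-((3 : ℕ) : ℤ)) := by
      rw [PadicInt.norm_int_le_pow_iff_dvd]
      norm_num
      omega
    refine h3.trans_lt ?_
    norm_num [zpow_neg])
  refine ⟨1 / 4, w / 8, ?_⟩
  push_cast at hw
  rw [div_pow, hw]
  field_simp
  ring

lemma aux_p_s15 (p : ℕ) [Fact p.Prime] (h1 : p % 8 = 1) :
    ∃ z w : ℚ_[p], w ^ 2 = 4 * (p : ℚ_[p]) * z ^ 4 - 1 := by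
  obtain ⟨i, hi⟩ := (ZMod.exists_sq_eq_neg_one_iff (p := p)).2 (by omega)
  have hpp : p.Prime := Fact.out
  obtain ⟨a, rfl⟩ := ZMod.intCast_surjective i
  have hdvd : (p : ℤ) ∣ a ^ 2 - (-1) := by
    rw [← ZMod.intCast_zmod_eq_zero_iff_dvd]  
    push_cast
    rw [pow_two, ← hi]; ring
  obtain ⟨w, hw⟩ := aux_hensel p (-1) a (by
    have h2 : ‖((2 * a : ℤ) : ℤ_[p])‖ = 1 := by
      refine le_antisymm (PadicInt.norm_le_one _) (not_lt.1 fun h => ?_)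
      rw [PadicInt.norm_int_lt_one_iff_dvd] at h
      have h3 : (p : ℤ) ∣ 4 := by
        have := (h.mul_left (2 * a)).sub (hdvd.mul_left 4)
        have e : 2 * a * (2 * a) - 4 * (a ^ 2 - (-1)) = -4 := by ring
        rw [e] at this
        simpa using this
      have h5 : p ∣ 4 := by exact_mod_cast h3
      have := Nat.le_of_dvd (by norm_num) h5
      have := hpp.two_le
      omega
    rw [h2, one_pow, PadicInt.norm_int_lt_one_iff_dvd]
    exact hdvd)
  refine ⟨0, w, ?_⟩
  rw [hw]; simp

lemma aux_sq1 : ∀ x < 16, x ^ 2 % 16 = 1 → x % 8 = 1 ∨ x % 8 = 7 := by decide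

lemma aux_sq9 : ∀ x < 16, x ^ 2 % 16 = 9 → ¬ (x % 8 = 1 ∨ x % 8 = 7) := by decide

lemma aux_r4 : ∀ x < 16, x % 2 = 1 → x ^ 4 % 16 = 1 := by decide

set_option maxHeartbeats 1000000 in
lemma aux_main_s15 (p : ℕ) [Fact p.Prime] (h1 : p % 8 = 1) (m t r : ℕ) (hr : r % 2 = 1)
    (hc : Nat.Coprime r t) (h : m ^ 2 + 4 * t ^ 4 = p * r ^ 4) :
    ∃ d : ZMod p, d ^ 4 = 2 := by
  have hpp : p.Prime := Fact.out
  have hr16 : r ^ 4 % 16 = 1 := by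
    have : r % 16 < 16 := Nat.mod_lt _ (by norm_num)
    rw [Nat.pow_mod]
    exact aux_r4 _ this (by omega)
  have hpr : p * r ^ 4 % 16 = p % 16 := by rw [Nat.mul_mod, hr16]; simp
  -- parity of t and m
  have ht2 : t % 2 = 0 ∧ m ^ 2 % 16 = p % 16 ∧ m % 2 = 1 := by
    have e : (m ^ 2 + 4 * t ^ 4) % 16 = p % 16 := by rw [h, hpr]
    have hm : m ^ 2 % 16 = (m % 16) ^ 2 % 16 := by rw [Nat.pow_mod]
    have ht : t ^ 4 % 16 = (t % 16) ^ 4 % 16 := by rw [Nat.pow_mod]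
    have hm' : m % 16 < 16 := Nat.mod_lt _ (by norm_num)
    have ht' : t % 16 < 16 := Nat.mod_lt _ (by norm_num)
    have hm2 : m % 16 % 2 = m % 2 := by omega
    have htt2 : t % 16 % 2 = t % 2 := by omega
    generalize m % 16 = x at *
    generalize t % 16 = y at *
    generalize m ^ 2 = M at *
    generalize t ^ 4 = T at *
    have hx2 : (x ^ 2 % 16 = 0 ∨ x ^ 2 % 16 = 4) ∧ x % 2 = 0 ∨ (x ^ 2 % 16 = 1 ∨ x ^ 2 % 16 = 9) ∧ x % 2 = 1 := by
      interval_cases x <;> simp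
    have hy4 : y ^ 4 % 16 = 0 ∧ y % 2 = 0 ∨ y ^ 4 % 16 = 1 ∧ y % 2 = 1 := by
      interval_cases y <;> simp
    omega
  obtain ⟨ht2, hm16, hm2⟩ := ht2
  have hmodd : Odd m := Nat.odd_iff.2 hm2
  -- coprimality
  have hmt : Nat.Coprime m t := by
    refine Nat.Coprime.symm (Nat.coprime_of_dvd fun q hq hqt hqm => ?_)
    have h2 : q ^ 2 ∣ p * r ^ 4 := by
      rw [← h]
      refine dvd_add (pow_dvd_pow_of_dvd hqm 2) ?_
      exact Dvd.dvd.mul_left ((pow_dvd_pow_of_dvd hqt 2).trans (pow_dvd_pow t (by norm_num))) _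
    have hqr : Nat.Coprime (q ^ 2) (r ^ 4) :=
      Nat.Coprime.pow _ _ (Nat.Coprime.coprime_dvd_left hqt hc.symm)
    have h3 : q ^ 2 ∣ p := hqr.dvd_of_dvd_mul_right h2
    have h4 : q ∣ p := (dvd_pow_self q two_ne_zero).trans h3
    have h5 := (Nat.prime_dvd_prime_iff_eq hq hpp).1 h4
    subst h5
    have := Nat.le_of_dvd hpp.pos h3
    have := hpp.two_le
    nlinarith
  have hm0 : (m : ZMod p) ≠ 0 := by
    intro h0
    rw [ZMod.natCast_eq_zero_iff] at h0
    have h2 : p ∣ 4 * t ^ 4 := by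
      have h3 : p ∣ m ^ 2 + 4 * t ^ 4 := h ▸ dvd_mul_right _ _
      exact (Nat.dvd_add_right (dvd_pow h0 two_ne_zero)).1 h3
    rcases hpp.dvd_mul.1 h2 with h3 | h3
    · have := Nat.le_of_dvd (by norm_num) h3
      have := hpp.two_le
      omega
    · exact hpp.one_lt.ne' (Nat.eq_one_of_dvd_coprimes hmt h0 (hpp.dvd_of_dvd_pow h3))
  obtain ⟨n, hn⟩ : ∃ n, n = m + 2 * t ^ 2 := ⟨_, rfl⟩
  have ht8 : 2 * t ^ 2 % 8 = 0 := by
    obtain ⟨s, rfl⟩ : 2 ∣ t := by omega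
    have : 2 * (2 * s) ^ 2 = 8 * s ^ 2 := by ring
    omega
  have hnodd : Odd n := by rw [Nat.odd_iff]; omega
  have hZ : (m : ℤ) ^ 2 + 4 * t ^ 4 = p * r ^ 4 := by exact_mod_cast h
  have hm2t : IsCoprime (2 * (t : ℤ) ^ 2) (m : ℤ) := by
    have a1 : Nat.Coprime (2 * t ^ 2) m :=
      Nat.Coprime.mul_left (by simpa using hmodd) (hmt.symm.pow_left 2)
    have := Nat.isCoprime_iff_coprime.2 a1
    push_cast at this
    exact this
  have key : ∀ x y : ℤ, (x = 1 ∨ x = -1) → (y = 0 ∨ y = 1 ∨ y = -1) → ∀ z : ℤ, 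
      (z = 0 ∨ z = 1 ∨ z = -1) → x * y * z ^ 4 = 1 → y = x := by
    rintro x y (rfl | rfl) (rfl | rfl | rfl) z (rfl | rfl | rfl) <;> norm_num
  -- symbol of m
  have hJm : J((m : ℤ) | p) = 1 := by
    rw [← jacobiSym.quadratic_reciprocity_one_mod_four (by omega) hmodd]
    refine key 1 _ (Or.inl rfl) (jacobiSym.trichotomy _ _) J((r : ℤ) | m) (jacobiSym.trichotomy _ _) ?_
    rw [one_mul, ← jacobiSym.pow_left, ← jacobiSym.mul_left, ← hZ]
    rw [← jacobiSym.sq_one' (a := 2 * (t : ℤ) ^ 2) (b := m) (Int.isCoprime_iff_gcd_eq_one.1 hm2t)]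
    apply jacobiSym.mod_left'
    apply Int.ModEq.symm
    rw [Int.modEq_iff_dvd]
    exact ⟨m, by ring⟩
  have hJ2 : J((2 : ℤ) | n) = 1 ∨ J((2 : ℤ) | n) = -1 :=
    jacobiSym.eq_one_or_neg_one (Int.isCoprime_iff_gcd_eq_one.1 (by
      have := Nat.isCoprime_iff_coprime.2 (Nat.coprime_two_left.2 hnodd)
      exact_mod_cast this))
  have hJn : J((n : ℤ) | p) = J((2 : ℤ) | n) := by
    rw [← jacobiSym.quadratic_reciprocity_one_mod_four (by omega) hnodd]
    refine key _ _ hJ2 (jacobiSym.trichotomy _ _) J((r : ℤ) | n) (jacobiSym.trichotomy _ _) ?_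
    rw [← jacobiSym.pow_left, ← jacobiSym.mul_left, ← jacobiSym.mul_left, mul_assoc, ← hZ]
    have hco : IsCoprime (2 * (2 * (t : ℤ) ^ 2)) (n : ℤ) := by
      refine IsCoprime.mul_left ?_ ?_
      · have := Nat.isCoprime_iff_coprime.2 (Nat.coprime_two_left.2 hnodd)
        exact_mod_cast this
      · rw [hn]; push_cast
        simpa using hm2t.add_mul_left_right 1
    have hco2 : IsCoprime ((m : ℤ) - 2 * t ^ 2) (n : ℤ) := by
      have e : (m : ℤ) - 2 * t ^ 2 = -(2 * (2 * (t : ℤ) ^ 2)) + n * 1 := by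
        rw [hn]; push_cast; ring
      rw [e]
      exact hco.neg_left.add_mul_left_left 1
    rw [← jacobiSym.sq_one' (Int.isCoprime_iff_gcd_eq_one.1 hco2)]
    apply jacobiSym.mod_left'
    apply Int.ModEq.symm
    rw [Int.modEq_iff_dvd]
    exact ⟨n, by rw [hn]; push_cast; ring⟩
  obtain ⟨k, hk⟩ : ∃ k, p = 8 * k + 1 := ⟨p / 8, by omega⟩
  have hp2 : p / 2 = 4 * k := by omega
  have hJ2k : J((2 : ℤ) | n) = (-1) ^ k := by
    rw [jacobiSym.at_two hnodd, ZMod.χ₈_nat_eq_if_mod_eight]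
    have hn8 : n % 8 = m % 8 := by omega
    have hm' : m % 16 < 16 := Nat.mod_lt _ (by norm_num)
    have hmm : m % 16 % 8 = m % 8 := by omega
    have hmm2 : m % 16 % 2 = m % 2 := by omega
    rw [if_neg (by omega), hn8]
    rw [Nat.pow_mod] at hm16
    generalize m % 16 = x at *
    rcases Nat.even_or_odd k with hkk | hkk
    · rw [hkk.neg_one_pow]
      have : p % 16 = 1 := by obtain ⟨l, rfl⟩ := hkk; omega
      rw [if_pos]
      rw [← hmm]
      exact aux_sq1 x hm' (hm16.trans this)
    · rw [hkk.neg_one_pow]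
      have : p % 16 = 9 := by obtain ⟨l, rfl⟩ := hkk; omega
      rw [if_neg]
      rw [← hmm]
      exact aux_sq9 x hm' (hm16.trans this)
  have em : (m : ZMod p) ^ (4 * k) = 1 := by
    have := legendreSym.eq_pow p (m : ℤ)
    rw [jacobiSym.legendreSym.to_jacobiSym, hJm, hp2] at this
    simpa using this.symm
  have en : (n : ZMod p) ^ (4 * k) = (-1) ^ k := by
    have := legendreSym.eq_pow p (n : ℤ)
    rw [jacobiSym.legendreSym.to_jacobiSym, hJn, hJ2k, hp2] at this
    simpa using this.symm
  have h20 : (2 : ZMod p) ≠ 0 := by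
    have : ((2 : ℕ) : ZMod p) ≠ 0 := by
      rw [Ne, ZMod.natCast_eq_zero_iff]
      intro h2
      have := Nat.le_of_dvd (by norm_num) h2
      have := hpp.two_le
      omega
    exact_mod_cast this
  obtain ⟨c, hcc⟩ := (ZMod.exists_sq_eq_two_iff (p := p) (by omega)).2 (Or.inl h1)
  have hZp : (m : ZMod p) ^ 2 + 4 * (t : ZMod p) ^ 4 = 0 := by
    have := congrArg (Nat.cast : ℕ → ZMod p) h
    push_cast at this
    simpa using this
  obtain ⟨i, hi⟩ : ∃ i : ZMod p, i * m = 2 * t ^ 2 := ⟨2 * t ^ 2 / m, by field_simp⟩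
  have hi2 : i ^ 2 = -1 := by
    have : (i ^ 2 + 1) * (m : ZMod p) ^ 2 = 0 := by
      linear_combination hZp + (i * m + 2 * t ^ 2) * hi
    rcases mul_eq_zero.1 this with h3 | h3
    · linear_combination h3
    · exact absurd h3 (pow_ne_zero 2 hm0)
  have hi0 : i ≠ 0 := by rintro rfl; simp at hi2
  obtain ⟨j, hj⟩ := (ZMod.euler_criterion p hi0).2 (by
    rw [hp2, show 4 * k = 2 * (2 * k) by ring, pow_mul, hi2, pow_mul]; simp)
  have hj4 : j ^ 4 = -1 := by rw [← hi2, hj]; ring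
  have hnn : (c * j * m) ^ 2 = (n : ZMod p) ^ 2 := by
    rw [hn]; push_cast
    rw [← hi]
    linear_combination (-j ^ 2 * m ^ 2) * hcc - (2 * (m : ZMod p) ^ 2) * hj - (m : ZMod p) ^ 2 * hi2
  have hpow : (c * j * m) ^ (4 * k) = (n : ZMod p) ^ (4 * k) := by
    rw [show 4 * k = 2 * (2 * k) by ring, pow_mul, hnn, ← pow_mul]
  rw [mul_pow, mul_pow, em, en, pow_mul j, hj4, mul_one] at hpow
  have hck : c ^ (p / 2) = 1 := by
    rw [hp2]
    exact mul_right_cancel₀ (pow_ne_zero k (neg_ne_zero.2 one_ne_zero)) (hpow.trans (one_mul _).symm)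
  have hc0 : c ≠ 0 := by rintro rfl; simp at hcc; exact h20 hcc
  obtain ⟨d, hd⟩ := (ZMod.euler_criterion p hc0).2 hck
  exact ⟨d, by rw [hcc, hd]; ring⟩

lemma aux_rat (p : ℕ) [Fact p.Prime] (h1 : p % 8 = 1) (z w : ℚ)
    (h : w ^ 2 = 4 * (p : ℚ) * z ^ 4 - 1) : ∃ d : ZMod p, d ^ 4 = 2 := by
  have hs0 : (z.den : ℚ) ≠ 0 := by exact_mod_cast z.den_ne_zero
  have hz : z * z.den = z.num := Rat.mul_den_eq_num z
  have hn : (w * z.den ^ 2) ^ 2 = ((4 * p * z.num ^ 4 - z.den ^ 4 : ℤ) : ℚ) := by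
    push_cast
    rw [← hz]
    linear_combination (z.den : ℚ) ^ 4 * h
  obtain ⟨n, hn2⟩ : ∃ n : ℤ, n ^ 2 = 4 * p * z.num ^ 4 - z.den ^ 4 := by
    have hsq : IsSquare ((4 * p * z.num ^ 4 - z.den ^ 4 : ℤ) : ℚ) := ⟨_, by rw [← hn, pow_two]⟩
    obtain ⟨n, hn⟩ := Rat.isSquare_intCast_iff.1 hsq
    exact ⟨n, by rw [hn]; ring⟩
  have hcop := z.reduced
  generalize z.den = s at *
  have hN : n.natAbs ^ 2 + s ^ 4 = 4 * (p * z.num.natAbs ^ 4) := by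
    zify
    rw [sq_abs, hn2, Even.pow_abs ⟨2, rfl⟩]
    ring
  generalize n.natAbs = n at *
  generalize z.num.natAbs = r at *
  have : n % 2 = 0 ∧ s % 2 = 0 := by
    have a1 : n ^ 2 % 4 = (n % 4) ^ 2 % 4 := by rw [Nat.pow_mod]
    have a2 : s ^ 4 % 4 = (s % 4) ^ 4 % 4 := by rw [Nat.pow_mod]
    have b1 : n % 4 = 0 ∨ n % 4 = 1 ∨ n % 4 = 2 ∨ n % 4 = 3 := by omega
    have b2 : s % 4 = 0 ∨ s % 4 = 1 ∨ s % 4 = 2 ∨ s % 4 = 3 := by omega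
    rcases b1 with b1 | b1 | b1 | b1 <;> rcases b2 with b2 | b2 | b2 | b2 <;>
      rw [b1] at a1 <;> rw [b2] at a2 <;> omega
  obtain ⟨m, rfl⟩ : 2 ∣ n := by omega
  obtain ⟨t, rfl⟩ : 2 ∣ s := by omega
  have hr : r % 2 = 1 := by
    have : Nat.Coprime r 2 := hcop.coprime_mul_right_right
    rwa [Nat.coprime_two_right, Nat.odd_iff] at this
  exact aux_main_s15 p h1 m t r hr hcop.coprime_mul_left_right (by
    have : (2 * m) ^ 2 + (2 * t) ^ 4 = 4 * (m ^ 2 + 4 * t ^ 4) := by ring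
    omega)

/-- For a prime `p ≡ 1 (mod 8)` such that `2` is not a quartic residue modulo `p`,
the equation `w² = 4·p·z⁴ − 1` has solutions in `ℝ`, in `ℚ₂` and in `ℚ_p`, but none in `ℚ`:
the Hasse principle fails for the curve `w² = 4pz⁴ − 1`. -/
theorem stmt15 (p : ℕ) [Fact p.Prime] (h1 : p % 8 = 1)
    (hq : ¬ ∃ x : ℤ, x ^ 4 ≡ 2 [ZMOD (p : ℤ)]) :
    (∃ z w : ℝ, w ^ 2 = 4 * (p : ℝ) * z ^ 4 - 1) ∧
    (∃ z w : ℚ_[2], w ^ 2 = 4 * (p : ℚ_[2]) * z ^ 4 - 1) ∧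
    (∃ z w : ℚ_[p], w ^ 2 = 4 * (p : ℚ_[p]) * z ^ 4 - 1) ∧
    ¬ ∃ z w : ℚ, w ^ 2 = 4 * (p : ℚ) * z ^ 4 - 1 := by
  have hpp : p.Prime := Fact.out
  refine ⟨⟨1, √(4 * p - 1), ?_⟩, aux_two_s15 p h1, aux_p_s15 p h1, ?_⟩
  · rw [Real.sq_sqrt]
    · ring
    · have : (1 : ℝ) ≤ p := by exact_mod_cast hpp.one_le
      linarith
  · rintro ⟨z, w, h⟩
    obtain ⟨d, hd⟩ := aux_rat p h1 z w h
    obtain ⟨x, rfl⟩ := ZMod.intCast_surjective d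
    refine hq ⟨x, ?_⟩
    rw [← ZMod.intCast_eq_intCast_iff]
    push_cast
    exact hd
end
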